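/- Let E be a directed graph and K a field. (1) If the Leavitt path algebra L_K(E) is left artinian, then L_K(E)^× ≅ ∏_{i∈I} GL_{n_i}(K), where |I| is the number of sinks in E and, for each i ∈ I, n_i is the number of finite paths in E ending in the sink corresponding to i. (2) If L_K(E) is left noetherian, then L_K(E)^× ≅ ∏_{i∈I} GL_{n_i}(K) × ∏_{j∈J} GL_{m_j}(K[x, x^{-1}]), where |I| and the n_i are as above, |J| is the number of (necessarily disjoint) cycles in E, and for each j ∈ J, m_j is the number of finite paths ending in the cycle corresponding to j. -/

import Mathlib

/-!
A path is said to arrive at a set `D` of vertices if it ends in `D` and uses no edge starting in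
`D`. Let the terminal sets be the singletons `{w}`, for sinks `w`, and the vertex sets of the cycles.

If `L = L_K(E)` is left Noetherian, it contains no infinite family of nonzero orthogonal idempotents
(`finite_of_orthogonal`), so `E` has finitely many vertices and no infinite emitters. One-sided
inverses in `L` are two-sided, so no cycle has an exit (`cycleNoExit`): for a cycle `p` based at `v`
one has `p^* p = v`, and an exit would make `p p^* ≠ v`. Hence no path leaves a terminal set, and the
terminal sets are disjoint. The corner `v L v` at a vertex `v` of a terminal set is `K` for a sink
(`nonempty_terminal_sink`) and `K[T, T⁻¹]` for a cycle (`nonempty_terminal_cycle`), where `T` goes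
to `p`. Injectivity of the map from `K[T, T⁻¹]` comes from the `ℤ`-grading (`exists_gauge`) and from
the vertices being nonzero (`vtx_ne_zero`), which is seen from an explicit module.

The structure `Terminal` records these facts. For paths `p`, `q` arriving at the same terminal set
and `y` in its corner ring, the elements `p y q^*` multiply like scaled matrix units, those for
different terminal sets being orthogonal. Left multiplication by a generator keeps their span
stable. Finally `∑ p p^* = 1`: otherwise, expanding a vertex by (CK2) again and again,
one would follow edges forever outside the terminal sets and thus meet a further cycle
(`exists_cycle`). Therefore `L` is the product of the matrix rings over the corner rings indexed by
the arriving paths (`nonempty_ringEquiv_of_terminal`, `nonempty_ringEquiv_of_noetherian`), and the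
Noetherian case follows by taking units.

A left Artinian `L` is left Noetherian, and it has no cycles since a nonempty matrix ring over
`K[T, T⁻¹]` is not Artinian (`not_isArtinianRing_matrix`).
-/


noncomputable section
open scoped Classical
universe u

/-- `a` and `b` generate a free group of rank two, i.e. form a non-cyclic free subgroup. -/
def FreePair {G : Type*} [Group G] (a b : G) : Prop :=
  Function.Injective (FreeGroup.lift ![a, b] : FreeGroup (Fin 2) →* G)

/-- A field is absolute (locally finite) if every finite subset generates a finite
subfield over the prime subfield. -/
def IsAbsoluteField (K : Type*) [Field K] : Prop :=
  ∀ S : Finset K, ((Subfield.closure (S : Set K) : Subfield K) : Set K).Finite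

/-- `a` is transcendental over the prime subfield of `K`. -/
def TranscendentalOverPrime (K : Type*) [Field K] (a : K) : Prop :=
  ∀ p : Polynomial ℤ, Polynomial.aeval a p = 0 → p.map (Int.castRingHom K) = 0

/-- `a` and `b` are algebraically independent over the prime subfield of `K`. -/
def AlgIndepOverPrime (K : Type*) [Field K] (a b : K) : Prop :=
  ∀ p : MvPolynomial (Fin 2) ℤ, MvPolynomial.aeval ![a, b] p = 0 →
    MvPolynomial.map (Int.castRingHom K) p = 0

/-- A two-sided ideal is (left) primitive if it is the annihilator of a simple left module. -/
def IsPrimitiveIdeal {R : Type u} [Ring R] (P : TwoSidedIdeal R) : Prop :=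
  ∃ (M : Type u) (_ : AddCommGroup M) (_ : Module R M),
    IsSimpleModule R M ∧ ∀ x : R, x ∈ P ↔ ∀ m : M, x • m = 0

namespace LPA

/-- Generators of Cohn/Leavitt path algebras: vertices, edges and ghost edges. -/
inductive Gen (V : Type*) (E : Type*)
  | vertex : V → Gen V E
  | edge : E → Gen V E
  | ghost : E → Gen V E

section rels

variable (K : Type*) [Field K] {V E : Type*} (s r : E → V)

/-- The defining relations (V), (E1), (E2), (CK1) of the Cohn path algebra of the graph
with vertex set `V`, edge set `E`, source map `s` and range map `r`; together with the
identification of `1` with the sum of all vertices when the vertex set is finite. -/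
inductive CohnRel : FreeAlgebra K (Gen V E) → FreeAlgebra K (Gen V E) → Prop
  | vtx_mul (v w : V) :
      CohnRel (FreeAlgebra.ι K (Gen.vertex v) * FreeAlgebra.ι K (Gen.vertex w))
        (if v = w then FreeAlgebra.ι K (Gen.vertex v) else 0)
  | edge_src (e : E) :
      CohnRel (FreeAlgebra.ι K (Gen.vertex (s e)) * FreeAlgebra.ι K (Gen.edge e))
        (FreeAlgebra.ι K (Gen.edge e))
  | edge_rng (e : E) :
      CohnRel (FreeAlgebra.ι K (Gen.edge e) * FreeAlgebra.ι K (Gen.vertex (r e)))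
        (FreeAlgebra.ι K (Gen.edge e))
  | ghost_rng (e : E) :
      CohnRel (FreeAlgebra.ι K (Gen.vertex (r e)) * FreeAlgebra.ι K (Gen.ghost e))
        (FreeAlgebra.ι K (Gen.ghost e))
  | ghost_src (e : E) :
      CohnRel (FreeAlgebra.ι K (Gen.ghost e) * FreeAlgebra.ι K (Gen.vertex (s e)))
        (FreeAlgebra.ι K (Gen.ghost e))
  | ck1 (e f : E) :
      CohnRel (FreeAlgebra.ι K (Gen.ghost e) * FreeAlgebra.ι K (Gen.edge f))
        (if e = f then FreeAlgebra.ι K (Gen.vertex (r e)) else 0)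
  | unit [Fintype V] :
      CohnRel (1 : FreeAlgebra K (Gen V E)) (∑ v : V, FreeAlgebra.ι K (Gen.vertex v))

/-- The defining relations of the Leavitt path algebra: those of the Cohn path algebra
together with the (CK2) relations at every regular vertex. -/
inductive LeavittRel : FreeAlgebra K (Gen V E) → FreeAlgebra K (Gen V E) → Prop
  | cohn {a b : FreeAlgebra K (Gen V E)} : CohnRel K s r a b → LeavittRel a b
  | ck2 (v : V) (hfin : {e : E | s e = v}.Finite) (hne : {e : E | s e = v}.Nonempty) :
      LeavittRel (FreeAlgebra.ι K (Gen.vertex v))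
        (∑ e ∈ hfin.toFinset, FreeAlgebra.ι K (Gen.edge e) * FreeAlgebra.ι K (Gen.ghost e))

/-- The Cohn path algebra of the graph `(V, E, s, r)` with coefficients in `K`. -/
abbrev CohnPathAlgebra := RingQuot (CohnRel K s r)

/-- The Leavitt path algebra of the graph `(V, E, s, r)` with coefficients in `K`. -/
abbrev LeavittPathAlgebra := RingQuot (LeavittRel K s r)

/-- The image of a vertex in the Leavitt path algebra. -/
def vtx (v : V) : LeavittPathAlgebra K s r :=
  RingQuot.mkAlgHom K (LeavittRel K s r) (FreeAlgebra.ι K (Gen.vertex v))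

/-- The image of an edge in the Leavitt path algebra. -/
def edg (e : E) : LeavittPathAlgebra K s r :=
  RingQuot.mkAlgHom K (LeavittRel K s r) (FreeAlgebra.ι K (Gen.edge e))

/-- The image of a ghost edge in the Leavitt path algebra. -/
def gh (e : E) : LeavittPathAlgebra K s r :=
  RingQuot.mkAlgHom K (LeavittRel K s r) (FreeAlgebra.ι K (Gen.ghost e))

end rels

section graph

variable {V E : Type*}

/-- `u ≥ v` : there is a (finite, possibly trivial) path from `u` to `v`. -/
def Reaches (s r : E → V) (u v : V) : Prop :=
  Relation.ReflTransGen (fun a b => ∃ e : E, s e = a ∧ r e = b) u v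

/-- A sink emits no edges. -/
def IsSink (s : E → V) (v : V) : Prop := ∀ e : E, s e ≠ v

/-- An infinite emitter emits infinitely many edges. -/
def IsInfiniteEmitter (s : E → V) (v : V) : Prop := {e : E | s e = v}.Infinite

/-- A regular vertex is neither a sink nor an infinite emitter. -/
def IsRegular (s : E → V) (v : V) : Prop :=
  (∃ e : E, s e = v) ∧ {e : E | s e = v}.Finite

/-- Hereditary subsets of vertices. -/
def IsHereditary (s r : E → V) (H : Set V) : Prop :=
  ∀ u ∈ H, ∀ v : V, Reaches s r u v → v ∈ H

/-- Saturated subsets of vertices. -/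
def IsSaturated (s r : E → V) (H : Set V) : Prop :=
  ∀ v : V, IsRegular s v → (∀ e : E, s e = v → r e ∈ H) → v ∈ H

/-- A breaking vertex of a hereditary saturated set `H`. -/
def IsBreakingVertex (s r : E → V) (H : Set V) (w : V) : Prop :=
  w ∉ H ∧ IsInfiniteEmitter s w ∧
    {e : E | s e = w ∧ r e ∉ H}.Finite ∧ {e : E | s e = w ∧ r e ∉ H}.Nonempty

/-- An infinite path, as a sequence of composable edges. -/
def IsInfPath (s r : E → V) (p : ℕ → E) : Prop := ∀ i, r (p i) = s (p (i + 1))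

/-- Tail equivalence of infinite paths. -/
def TailEquiv (p q : ℕ → E) : Prop := ∃ m n : ℕ, ∀ i, p (m + i) = q (n + i)

/-- Prepending an edge to an infinite path. -/
def consPath (f : E) (p : ℕ → E) : ℕ → E := fun i =>
  match i with
  | 0 => f
  | (j + 1) => p j

/-- A cycle of length `m`, encoded as the `m`-periodic infinite path obtained by
traversing it repeatedly; the sources of its first `m` edges are pairwise distinct. -/
def IsCycle (s r : E → V) (m : ℕ) (c : ℕ → E) : Prop :=
  0 < m ∧ IsInfPath s r c ∧ (∀ i, c (i + m) = c i) ∧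
    ∀ i j, i < m → j < m → s (c i) = s (c j) → i = j

/-- A cycle (as a periodic infinite path) has no exits. -/
def CycleNoExit (s : E → V) (c : ℕ → E) : Prop :=
  ∀ i, ∀ e : E, s e = s (c i) → e = c i

/-- An exclusive cycle: every cycle based at one of its vertices is a rotation of it. -/
def IsExclusiveCycle (s r : E → V) (m : ℕ) (c : ℕ → E) : Prop :=
  IsCycle s r m c ∧ ∀ (m' : ℕ) (c' : ℕ → E), IsCycle s r m' c' →
    (∃ i, s (c' 0) = s (c i)) → ∃ k, ∀ j, c' j = c (j + k)

/-- `l` is (the list of edges of) a finite path starting at the vertex `v`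
(the empty list is the trivial path at `v`). -/
def IsPathFrom (s r : E → V) (v : V) (l : List E) : Prop :=
  l.Chain' (fun e f => r e = s f) ∧ ∀ h : l ≠ [], s (l.head h) = v

/-- The terminal vertex of a finite path starting at `v`. -/
def pathEnd (r : E → V) (v : V) (l : List E) : V :=
  if h : l ≠ [] then r (l.getLast h) else v

end graph

section elements

variable (K : Type*) [Field K] {V E : Type*} (s r : E → V)

/-- The finite set of edges emitted by a breaking vertex `w` of `H` whose range is
outside `H` (junk value `∅` if that set of edges is infinite). -/
def breakingFinset (H : Set V) (w : V) : Finset E :=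
  if h : {e : E | s e = w ∧ r e ∉ H}.Finite then h.toFinset else ∅

/-- The element `w^H = w - ∑_{s(e) = w, r(e) ∉ H} e e^*` of the Leavitt path algebra. -/
def wHElem (H : Set V) (w : V) : LeavittPathAlgebra K s r :=
  vtx K s r w - ∑ e ∈ breakingFinset s r H w, edg K s r e * gh K s r e

/-- The ideal `I(H, S)` generated by the vertices in `H` and the elements `w^H`, `w ∈ S`. -/
def idealHS (H : Set V) (S : Set V) : TwoSidedIdeal (LeavittPathAlgebra K s r) :=
  TwoSidedIdeal.span ((fun v => vtx K s r v) '' H ∪ (fun w => wHElem K s r H w) '' S)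

end elements

end LPA

/-- A (left) primitive ring: a ring admitting a faithful simple left module. -/
def IsPrimitiveRing (R : Type u) [Ring R] : Prop :=
  ∃ (M : Type u) (_ : AddCommGroup M) (_ : Module R M),
    IsSimpleModule R M ∧ ∀ x : R, (∀ m : M, x • m = 0) → x = 0

namespace LPA

section conc

variable {V E : Type*}

/-- Reachability through paths all of whose vertices beyond the first lie outside `H`,
i.e. reachability in the quotient graph `E ∖ (H, B_H)`. -/
def ReachesOutside (s r : E → V) (H : Set V) (u v : V) : Prop :=
  Relation.ReflTransGen (fun a b => ∃ e : E, s e = a ∧ r e = b ∧ r e ∉ H) u v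

variable (K : Type*) [Field K] (s r : E → V)

/-- The standard conclusion: for an edge `f`, in characteristic zero the elements
`a = 1 + α f^*`, `b = 1 + α f` (with `α = 2` or transcendental over the prime field)
generate a non-cyclic free subgroup of `L_K(E)^×`, and in characteristic `t > 0` the
elements `c = a + (β - 1) s(f) + (β⁻¹ - 1) r(f)`, `d = b + (β - 1) s(f) + (β⁻¹ - 1) r(f)`
(with `α, β` algebraically independent over the prime field) do. -/
def FreeSubgroupFromEdge (f : E) : Prop :=
  ∀ α β : K,
    (CharP K 0 → (α = 2 ∨ TranscendentalOverPrime K α) →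
      ∃ ua ub : (LeavittPathAlgebra K s r)ˣ,
        (ua : LeavittPathAlgebra K s r) =
            1 + algebraMap K (LeavittPathAlgebra K s r) α * gh K s r f ∧
        (ub : LeavittPathAlgebra K s r) =
            1 + algebraMap K (LeavittPathAlgebra K s r) α * edg K s r f ∧
        FreePair ua ub) ∧
    (∀ t : ℕ, 0 < t → CharP K t → AlgIndepOverPrime K α β →
      ∃ uc ud : (LeavittPathAlgebra K s r)ˣ,
        (uc : LeavittPathAlgebra K s r) =
            1 + algebraMap K (LeavittPathAlgebra K s r) α * gh K s r f
              + algebraMap K (LeavittPathAlgebra K s r) (β - 1) * vtx K s r (s f)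
              + algebraMap K (LeavittPathAlgebra K s r) (β⁻¹ - 1) * vtx K s r (r f) ∧
        (ud : LeavittPathAlgebra K s r) =
            1 + algebraMap K (LeavittPathAlgebra K s r) α * edg K s r f
              + algebraMap K (LeavittPathAlgebra K s r) (β - 1) * vtx K s r (s f)
              + algebraMap K (LeavittPathAlgebra K s r) (β⁻¹ - 1) * vtx K s r (r f) ∧
        FreePair uc ud)

end conc

end LPA


namespace LPA

variable {V E : Type*}

/-- The number of finite paths (including the trivial one) ending at the vertex `w`. -/
def nPathsTo (s r : E → V) (w : V) : ℕ :=
  Nat.card {p : V × List E // IsPathFrom s r p.1 p.2 ∧ pathEnd r p.1 p.2 = w}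

/-- The collection of vertex sets of cycles of the graph (indexing the cycles). -/
def cycleVertexSets (s r : E → V) : Set (Set V) :=
  {C | ∃ (m : ℕ) (c : ℕ → E), IsCycle s r m c ∧ C = {v : V | ∃ i, v = s (c i)}}

/-- The number of finite paths ending in the cycle with vertex set `C` (paths arriving at
the cycle, using no edge of the cycle, including the trivial paths at its vertices). -/
def nPathsToCycle (s r : E → V) (C : Set V) : ℕ :=
  Nat.card {p : V × List E //
    IsPathFrom s r p.1 p.2 ∧ pathEnd r p.1 p.2 ∈ C ∧ ∀ e ∈ p.2, s e ∉ C}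

end LPA

namespace LPA

/-! ### Relations in the Leavitt path algebra -/

section relations

variable {K V E : Type*} [Field K] {s r : E → V}

lemma vtx_mul_vtx (v w : V) :
    vtx K s r v * vtx K s r w = if v = w then vtx K s r v else 0 := by
  have h := RingQuot.mkAlgHom_rel K (LeavittRel.cohn (CohnRel.vtx_mul (K := K) (s := s) (r := r) v w))
  rw [map_mul] at h
  split_ifs with hvw
  · simpa [vtx, hvw] using h
  · simpa [vtx, hvw] using h

@[simp] lemma vtx_mul_self (v : V) : vtx K s r v * vtx K s r v = vtx K s r v := by
  simp [vtx_mul_vtx]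

@[simp] lemma vtx_mul_edg (e : E) : vtx K s r (s e) * edg K s r e = edg K s r e := by
  have h := RingQuot.mkAlgHom_rel K (LeavittRel.cohn (CohnRel.edge_src (K := K) (s := s) (r := r) e))
  rwa [map_mul] at h

@[simp] lemma edg_mul_vtx (e : E) : edg K s r e * vtx K s r (r e) = edg K s r e := by
  have h := RingQuot.mkAlgHom_rel K (LeavittRel.cohn (CohnRel.edge_rng (K := K) (s := s) (r := r) e))
  rwa [map_mul] at h

@[simp] lemma vtx_mul_gh (e : E) : vtx K s r (r e) * gh K s r e = gh K s r e := by
  have h := RingQuot.mkAlgHom_rel K (LeavittRel.cohn (CohnRel.ghost_rng (K := K) (s := s) (r := r) e))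
  rwa [map_mul] at h

@[simp] lemma gh_mul_vtx (e : E) : gh K s r e * vtx K s r (s e) = gh K s r e := by
  have h := RingQuot.mkAlgHom_rel K (LeavittRel.cohn (CohnRel.ghost_src (K := K) (s := s) (r := r) e))
  rwa [map_mul] at h

lemma gh_mul_edg (e f : E) :
    gh K s r e * edg K s r f = if e = f then vtx K s r (r e) else 0 := by
  have h := RingQuot.mkAlgHom_rel K (LeavittRel.cohn (CohnRel.ck1 (K := K) (s := s) (r := r) e f))
  rw [map_mul] at h
  split_ifs with hvw
  · simpa [vtx, edg, gh, hvw] using h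
  · simpa [vtx, edg, gh, hvw] using h

@[simp] lemma gh_mul_edg_self (e : E) : gh K s r e * edg K s r e = vtx K s r (r e) := by
  simp [gh_mul_edg]

lemma one_eq_sum [Fintype V] :
    (1 : LeavittPathAlgebra K s r) = ∑ v : V, vtx K s r v := by
  have h := RingQuot.mkAlgHom_rel K (LeavittRel.cohn (CohnRel.unit (K := K) (s := s) (r := r)))
  rw [map_one, map_sum] at h
  exact h

lemma vtx_eq_sum (v : V) (hfin : {e : E | s e = v}.Finite) (hne : {e : E | s e = v}.Nonempty) :
    vtx K s r v = ∑ e ∈ hfin.toFinset, edg K s r e * gh K s r e := by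
  have h := RingQuot.mkAlgHom_rel K (LeavittRel.ck2 (K := K) (s := s) (r := r) v hfin hne)
  rw [map_sum] at h
  simp only [map_mul] at h
  exact h

lemma vtx_mul_edg_ne {v : V} {e : E} (h : v ≠ s e) : vtx K s r v * edg K s r e = 0 := by
  rw [← vtx_mul_edg, ← mul_assoc, vtx_mul_vtx, if_neg h, zero_mul]

lemma edg_mul_vtx_ne {v : V} {e : E} (h : r e ≠ v) : edg K s r e * vtx K s r v = 0 := by
  rw [← edg_mul_vtx, mul_assoc, vtx_mul_vtx, if_neg h, mul_zero]

lemma gh_mul_vtx_ne {v : V} {e : E} (h : s e ≠ v) : gh K s r e * vtx K s r v = 0 := by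
  rw [← gh_mul_vtx, mul_assoc, vtx_mul_vtx, if_neg h, mul_zero]

/-- The vertices, edges and ghost edges generate the Leavitt path algebra. -/
lemma subalgebra_eq_top (S : Subalgebra K (LeavittPathAlgebra K s r))
    (hv : ∀ v, vtx K s r v ∈ S) (he : ∀ e, edg K s r e ∈ S) (hg : ∀ e, gh K s r e ∈ S) :
    S = ⊤ := by
  rw [eq_top_iff]
  rintro x -
  obtain ⟨y, rfl⟩ := RingQuot.mkAlgHom_surjective K (LeavittRel K s r) x
  induction y using FreeAlgebra.induction with
  | grade0 k => rw [AlgHom.commutes]; exact S.algebraMap_mem k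
  | grade1 x =>
    cases x with
    | vertex v => exact hv v
    | edge e => exact he e
    | ghost e => exact hg e
  | mul a b ha hb => rw [map_mul]; exact S.mul_mem ha hb
  | add a b ha hb => rw [map_add]; exact S.add_mem ha hb

/-- The universal property of the Leavitt path algebra. -/
lemma exists_lift {B : Type*} [Ring B] [Algebra K B] (fv : V → B) (fe fg : E → B)
    (hvv : ∀ v w, fv v * fv w = if v = w then fv v else 0)
    (hse : ∀ e, fv (s e) * fe e = fe e) (her : ∀ e, fe e * fv (r e) = fe e)
    (hrg : ∀ e, fv (r e) * fg e = fg e) (hgs : ∀ e, fg e * fv (s e) = fg e)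
    (hge : ∀ e f, fg e * fe f = if e = f then fv (r e) else 0)
    (h1 : ∀ _ : Fintype V, (1 : B) = ∑ v, fv v)
    (h2 : ∀ v (hfin : {e : E | s e = v}.Finite), {e : E | s e = v}.Nonempty →
      fv v = ∑ e ∈ hfin.toFinset, fe e * fg e) :
    ∃ φ : LeavittPathAlgebra K s r →ₐ[K] B,
      (∀ v, φ (vtx K s r v) = fv v) ∧ (∀ e, φ (edg K s r e) = fe e) ∧
        ∀ e, φ (gh K s r e) = fg e := by
  let g : Gen V E → B := fun x => match x with
    | .vertex v => fv v
    | .edge e => fe e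
    | .ghost e => fg e
  have hrel : ∀ ⦃x y : FreeAlgebra K (Gen V E)⦄, LeavittRel K s r x y →
      FreeAlgebra.lift K g x = FreeAlgebra.lift K g y := by
    intro x y hxy
    cases hxy with
    | cohn h =>
      cases h with
      | vtx_mul v w => have := hvv v w; split_ifs at this ⊢ <;> simpa [g] using this
      | edge_src e => simpa [g] using hse e
      | edge_rng e => simpa [g] using her e
      | ghost_rng e => simpa [g] using hrg e
      | ghost_src e => simpa [g] using hgs e
      | ck1 e f => have := hge e f; split_ifs at this ⊢ <;> simpa [g] using this
      | unit => simpa [g] using h1 _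
    | ck2 v hfin hne => simpa [g] using h2 v hfin hne
  refine ⟨RingQuot.liftAlgHom K ⟨FreeAlgebra.lift K g, hrel⟩, ?_, ?_, ?_⟩ <;> intro x
  · simp [vtx, g]
  · simp [edg, g]
  · simp [gh, g]

end relations

/-! ### Vertices are nonzero; the grading -/

section nonvanishing

/-- A set `κ` large enough that, for every non-sink `v`, it is a disjoint union of copies `f e κ`
of itself indexed by the edges `e` emitted by `v`. Here `lab` and `rst` recover `e` and `x` from
`f e x`; their first argument, any edge emitted by `v`, only serves to select `v`. -/
lemma exists_branching {V : Type*} {E : Type u} (s : E → V) :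
    ∃ (κ : Type u) (_ : Nonempty κ) (f : E → κ → κ) (lab : E → κ → E) (rst : E → κ → κ),
      (∀ e e' x, s e = s e' → lab e (f e' x) = e') ∧
      (∀ e e' x, s e = s e' → rst e (f e' x) = x) ∧
      (∀ e y, s (lab e y) = s e) ∧
      (∀ e y, f (lab e y) (rst e y) = y) ∧
      (∀ e e', s e = s e' → lab e = lab e') := by
  let κ := E ⊕ ULift.{u} ℕ
  have h : ∀ v : V, Nonempty {e : E // s e = v} → Nonempty (({e : E // s e = v} × κ) ≃ κ) := by
    intro v hv
    rw [← Cardinal.eq, Cardinal.mk_prod, Cardinal.lift_id, Cardinal.lift_id]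
    refine Cardinal.mul_eq_right (Cardinal.aleph0_le_mk κ) ?_ (Cardinal.mk_ne_zero _)
    exact Cardinal.mk_le_of_injective (f := fun e => Sum.inl e.1)
      (fun a b hab => Subtype.ext (Sum.inl_injective hab))
  have t : ∀ v : V, Nonempty {e : E // s e = v} → (({e : E // s e = v} × κ) ≃ κ) :=
    fun v hv => (h v hv).some
  refine ⟨κ, ⟨.inr ⟨0⟩⟩, fun e x => t (s e) ⟨⟨e, rfl⟩⟩ (⟨e, rfl⟩, x),
    fun e y => ((t (s e) ⟨⟨e, rfl⟩⟩).symm y).1.1,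
    fun e y => ((t (s e) ⟨⟨e, rfl⟩⟩).symm y).2, ?_, ?_, ?_, ?_, ?_⟩
  · have key : ∀ v w (hv : Nonempty {e : E // s e = v}) (e' : E) (hw : s e' = w) x, v = w →
        ((t v hv).symm (t w ⟨⟨e', hw⟩⟩ (⟨e', hw⟩, x))).1.1 = e' := by
      rintro v _ hv e' hw x rfl; simp
    intro e e' x h
    exact key _ _ _ e' rfl x h
  · have key : ∀ v w (hv : Nonempty {e : E // s e = v}) (e' : E) (hw : s e' = w) x, v = w →
        ((t v hv).symm (t w ⟨⟨e', hw⟩⟩ (⟨e', hw⟩, x))).2 = x := by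
      rintro v _ hv e' hw x rfl; simp
    intro e e' x h
    exact key _ _ _ e' rfl x h
  · intro e y
    exact ((t (s e) ⟨⟨e, rfl⟩⟩).symm y).1.2
  · have key : ∀ v (hv : Nonempty {e : E // s e = v}) (a : {e : E // s e = v}) (x : κ) y,
        (t v hv).symm y = (a, x) → t (s a.1) ⟨⟨a.1, rfl⟩⟩ (⟨a.1, rfl⟩, x) = y := by
      rintro _ hv ⟨a, rfl⟩ x y h
      rw [← h, Equiv.apply_symm_apply]
    intro e y
    exact key (s e) ⟨⟨e, rfl⟩⟩ _ _ y rfl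
  · have key : ∀ v w hv hw, v = w → (fun y => ((t v hv).symm y).1.1) =
        (fun y => ((t w hw).symm y).1.1) := by
      rintro v _ hv hw rfl; rfl
    intro e e' h
    exact key _ _ _ _ h

variable {K V E : Type*} [Field K] {s r : E → V}

/-- No vertex vanishes in the Leavitt path algebra. The algebra acts on the functions `V × κ → K`,
with `κ` as in `exists_branching`, each vertex acting as restriction to its copy of `κ`. -/
lemma vtx_ne_zero (v : V) : vtx K s r v ≠ 0 := by
  obtain ⟨κ, ⟨x₀⟩, f, lab, rst, h1, h2, h3, h4, h5⟩ := exists_branching s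
  let fv : V → Module.End K (V × κ → K) := fun v =>
    { toFun := fun g y => if y.1 = v then g y else 0
      map_add' := fun a b => by ext y; by_cases h : y.1 = v <;> simp [h]
      map_smul' := fun a b => by ext y; by_cases h : y.1 = v <;> simp [h] }
  let fe : E → Module.End K (V × κ → K) := fun e =>
    { toFun := fun g y => if y.1 = s e ∧ lab e y.2 = e then g (r e, rst e y.2) else 0
      map_add' := fun a b => by ext y; by_cases h : y.1 = s e ∧ lab e y.2 = e <;> simp [h]
      map_smul' := fun a b => by ext y; by_cases h : y.1 = s e ∧ lab e y.2 = e <;> simp [h] }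
  let fg : E → Module.End K (V × κ → K) := fun e =>
    { toFun := fun g y => if y.1 = r e then g (s e, f e y.2) else 0
      map_add' := fun a b => by ext y; by_cases h : y.1 = r e <;> simp [h]
      map_smul' := fun a b => by ext y; by_cases h : y.1 = r e <;> simp [h] }
  have fvd : ∀ v g y, fv v g y = if y.1 = v then g y else 0 := fun _ _ _ => rfl
  have fed : ∀ e g y, fe e g y =
    if y.1 = s e ∧ lab e y.2 = e then g (r e, rst e y.2) else 0 := fun _ _ _ => rfl
  have fgd : ∀ e g y, fg e g y = if y.1 = r e then g (s e, f e y.2) else 0 := fun _ _ _ => rfl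
  obtain ⟨φ, hφ, -, -⟩ := exists_lift (K := K) (s := s) (r := r) fv fe fg
    (fun v w => by
      ext g y
      by_cases hvw : v = w
      · subst hvw
        simp only [Module.End.mul_apply, fvd, if_true]
        split_ifs <;> rfl
      · simp only [Module.End.mul_apply, fvd, hvw, if_false, LinearMap.zero_apply, Pi.zero_apply]
        split_ifs with h h'
        · exact absurd (h.symm.trans h') hvw
        · rfl
        · rfl)
    (fun e => by
      ext g y
      simp only [Module.End.mul_apply, fvd, fed]
      split_ifs <;> simp_all)
    (fun e => by
      ext g y
      simp [Module.End.mul_apply, fvd, fed])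
    (fun e => by
      ext g y
      simp only [Module.End.mul_apply, fvd, fgd]
      split_ifs <;> simp_all)
    (fun e => by
      ext g y
      simp [Module.End.mul_apply, fvd, fgd])
    (fun e e' => by
      ext g y
      by_cases hee : e = e'
      · subst hee
        simp only [Module.End.mul_apply, fvd, fed, fgd, if_true, h1 e e _ rfl, h2 e e _ rfl,
          and_self]
        split_ifs with h
        · rw [← h]
        · rfl
      · simp only [Module.End.mul_apply, fed, fgd, hee, if_false, LinearMap.zero_apply,
          Pi.zero_apply]
        split_ifs with h h'
        · exact absurd ((h1 e' e _ h'.1.symm).symm.trans h'.2) hee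
        · rfl
        · rfl)
    (fun _ => by
      ext g y
      simp [LinearMap.sum_apply, Finset.sum_apply, fvd])
    (fun v hfin hne => by
      obtain ⟨e₀, he₀⟩ := hne
      ext g y
      simp only [LinearMap.sum_apply, Finset.sum_apply, Module.End.mul_apply, fvd, fed, fgd,
        if_true]
      split_ifs with h
      · have he₀' : s e₀ = v := he₀
        rw [Finset.sum_eq_single (lab e₀ y.2)]
        · have hs := h3 e₀ y.2
          have hl := h5 _ _ hs
          rw [if_pos ⟨by rw [hs, he₀', h], by rw [hl]⟩, hs, he₀']
          have := h4 (lab e₀ y.2) y.2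
          rw [hl] at this
          rw [this, ← h]
        · intro e he hne
          rw [if_neg]
          rintro ⟨-, h'⟩
          have : s e = v := by simpa using he
          rw [h5 e e₀ (by rw [this, he₀'])] at h'
          exact hne h'.symm
        · intro hn
          exact absurd (by simp [h3, he₀']) hn
      · refine (Finset.sum_eq_zero fun e he => if_neg ?_).symm
        rintro ⟨h', -⟩
        have : s e = v := by simpa using he
        exact h (h'.trans this))
  intro h0
  have := congrFun (LinearMap.congr_fun (hφ v) (fun _ => 1)) (v, x₀)
  rw [h0, map_zero, fvd] at this
  simp at this

/-- The coaction encoding the `ℤ`-grading for which edges have degree `1` and ghost edges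
degree `-1`. -/
lemma exists_gauge :
    ∃ γ : LeavittPathAlgebra K s r →ₐ[K] AddMonoidAlgebra (LeavittPathAlgebra K s r) ℤ,
      (∀ v, γ (vtx K s r v) = .single 0 (vtx K s r v)) ∧
      (∀ e, γ (edg K s r e) = .single 1 (edg K s r e)) ∧
      (∀ e, γ (gh K s r e) = .single (-1) (gh K s r e)) := by
  refine exists_lift (B := AddMonoidAlgebra (LeavittPathAlgebra K s r) ℤ)
    (fun v => .single 0 (vtx K s r v)) (fun e => .single 1 (edg K s r e))
    (fun e => .single (-1) (gh K s r e)) ?_ ?_ ?_ ?_ ?_ ?_ ?_ ?_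
  · intro v w
    rw [AddMonoidAlgebra.single_mul_single, vtx_mul_vtx]
    split_ifs <;> simp
  · intro e
    simp only [AddMonoidAlgebra.single_mul_single, vtx_mul_edg, zero_add]
  · intro e
    simp only [AddMonoidAlgebra.single_mul_single, edg_mul_vtx, add_zero]
  · intro e
    simp only [AddMonoidAlgebra.single_mul_single, vtx_mul_gh, zero_add]
  · intro e
    simp only [AddMonoidAlgebra.single_mul_single, gh_mul_vtx, add_zero]
  · intro e f
    rw [AddMonoidAlgebra.single_mul_single, gh_mul_edg]
    split_ifs <;> simp
  · intro _
    rw [AddMonoidAlgebra.one_def, one_eq_sum]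
    exact map_sum (AddMonoidAlgebra.singleAddHom 0) _ _
  · intro v hfin hne
    rw [vtx_eq_sum v hfin hne]
    simp only [AddMonoidAlgebra.single_mul_single, add_neg_cancel]
    exact map_sum (AddMonoidAlgebra.singleAddHom 0) _ _

end nonvanishing

/-! ### Idempotents and matrix units -/

section matrix_units

/-- A left noetherian ring has no infinite family of nonzero orthogonal idempotents. -/
lemma finite_of_orthogonal {R ι : Type*} [Ring R] [IsNoetherianRing R] (e : ι → R)
    (hne : ∀ i, e i ≠ 0) (hid : ∀ i, e i * e i = e i) (ho : ∀ i j, i ≠ j → e i * e j = 0) :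
    Finite ι := by
  obtain ⟨t, hts, hspan⟩ := (Submodule.fg_span_iff_fg_span_finset_subset (Set.range e)).1
    (IsNoetherian.noetherian (Submodule.span R (Set.range e)))
  have hmem : ∀ i, e i ∈ t := by
    intro i
    by_contra hi
    have hz : ∀ x ∈ Submodule.span R (t : Set R), x * e i = 0 := by
      intro x hx
      induction hx using Submodule.span_induction with
      | mem x hx =>
        obtain ⟨j, rfl⟩ := hts hx
        exact ho j i (by rintro rfl; exact hi hx)
      | zero => simp
      | add x y _ _ hx hy => rw [add_mul, hx, hy, add_zero]
      | smul a x _ hx => rw [smul_eq_mul, mul_assoc, hx, mul_zero]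
    apply hne i
    rw [← hid i]
    apply hz
    rw [← hspan]
    exact Submodule.subset_span ⟨i, rfl⟩
  refine Finite.of_injective (fun i => (⟨e i, hmem i⟩ : t)) fun i j hij => ?_
  by_contra hne'
  have : e i = e j := congrArg Subtype.val hij
  exact hne i (by rw [← hid i]; nth_rewrite 2 [this]; exact ho i j hne')

/-- Recognition of products of matrix rings: the elements `a i p * θ i y * b i q` behave like the
matrix units `E_{pq}` of the `i`-th factor scaled by `y`. They span the whole ring because their
span contains `1` and is stable under left multiplication by the generators `G`. -/
lemma matrix_recognition {K R I : Type*} [Field K] [Ring R] [Algebra K R] [Fintype I]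
    {P : I → Type*} [∀ i, Fintype (P i)] {A : I → Type*} [∀ i, Ring (A i)]
    [∀ i, Algebra K (A i)] (θ : ∀ i, A i →ₗ[K] R) (a b : ∀ i, P i → R)
    (hθ : ∀ i x y, θ i (x * y) = θ i x * θ i y) (hinj : ∀ i, Function.Injective (θ i))
    (hba : ∀ i p, b i p * a i p = θ i 1) (hbap : ∀ i p q, p ≠ q → b i p * a i q = 0)
    (hbai : ∀ i j p q, i ≠ j → b i p * a j q = 0)
    (hb : ∀ i p, θ i 1 * b i p = b i p) (h1 : ∑ i, ∑ p, a i p * b i p = 1)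
    (G : Set R) (hG : ∀ S : Subalgebra K R, G ⊆ S → S = ⊤)
    (hGa : ∀ g ∈ G, ∀ i p, ∃ q y, g * a i p = a i q * θ i y) :
    Nonempty ((∀ i, Matrix (P i) (P i) (A i)) ≃+* R) := by
  have hθ1 : ∀ i x, θ i 1 * θ i x = θ i x := fun i x => by rw [← hθ, one_mul]
  have hθ1' : ∀ i x, θ i x * θ i 1 = θ i x := fun i x => by rw [← hθ, mul_one]
  let ψ₀ : (∀ i, Matrix (P i) (P i) (A i)) → R :=
    fun M => ∑ i, ∑ p, ∑ q, a i p * θ i (M i p q) * b i q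
  have hψ₀ : ∀ M, ψ₀ M = ∑ i, ∑ p, ∑ q, a i p * θ i (M i p q) * b i q := fun _ => rfl
  have hrow : ∀ M i q, b i q * ψ₀ M = ∑ q', θ i (M i q q') * b i q' := by
    intro M i q
    rw [hψ₀, Finset.mul_sum, Finset.sum_eq_single i]
    · rw [Finset.mul_sum, Finset.sum_eq_single q]
      · rw [Finset.mul_sum]
        refine Finset.sum_congr rfl fun q' _ => ?_
        rw [← mul_assoc, ← mul_assoc, hba, hθ1]
      · intro p _ hp
        rw [Finset.mul_sum]
        refine Finset.sum_eq_zero fun q' _ => ?_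
        rw [← mul_assoc, ← mul_assoc, hbap i q p hp.symm, zero_mul, zero_mul]
      · simp
    · intro j _ hj
      simp only [Finset.mul_sum]
      refine Finset.sum_eq_zero fun p _ => Finset.sum_eq_zero fun q' _ => ?_
      rw [← mul_assoc, ← mul_assoc, hbai i j q p hj.symm, zero_mul, zero_mul]
    · simp
  let ψ : (∀ i, Matrix (P i) (P i) (A i)) →+* R :=
    { toFun := ψ₀
      map_zero' := by simp [hψ₀]
      map_add' := by
        intro M N
        simp [hψ₀, mul_add, add_mul, Finset.sum_add_distrib]
      map_one' := by
        rw [← h1, hψ₀]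
        refine Finset.sum_congr rfl fun i _ => Finset.sum_congr rfl fun p _ => ?_
        rw [Finset.sum_eq_single p]
        · rw [Pi.one_apply, Matrix.one_apply_eq, mul_assoc, hb]
        · intro q _ hq
          rw [Pi.one_apply, Matrix.one_apply_ne hq.symm]; simp
        · simp
      map_mul' := by
        intro M N
        rw [hψ₀ M, Finset.sum_mul, hψ₀ (M * N)]
        refine Finset.sum_congr rfl fun i _ => ?_
        rw [Finset.sum_mul]
        refine Finset.sum_congr rfl fun p _ => ?_
        rw [Finset.sum_mul]
        simp only [mul_assoc (a i p * _) _ (ψ₀ N), hrow, Pi.mul_apply, Matrix.mul_apply, map_sum,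
          Finset.mul_sum, Finset.sum_mul]
        rw [Finset.sum_comm]
        refine Finset.sum_congr rfl fun q _ => Finset.sum_congr rfl fun q' _ => ?_
        rw [hθ]; simp only [mul_assoc] }
  have hψ : ∀ M, ψ M = ψ₀ M := fun _ => rfl
  have hunit : ∀ i p q y, a i p * θ i y * b i q ∈ ψ.range := by
    intro i p q y
    refine ⟨Pi.single i (Matrix.single p q y), ?_⟩
    rw [hψ, hψ₀, Finset.sum_eq_single i, Finset.sum_eq_single p, Finset.sum_eq_single q]
    · simp
    · intro q' _ hq'
      simp [hq'.symm]
    · simp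
    · intro p' _ hp'
      refine Finset.sum_eq_zero fun q' _ => ?_
      simp [hp'.symm]
    · simp
    · intro j _ hj
      refine Finset.sum_eq_zero fun p' _ => Finset.sum_eq_zero fun q' _ => ?_
      simp [Pi.single_eq_of_ne hj]
    · simp
  -- The elements whose left multiplication preserves the range of `ψ`; it is everything, so the
  -- range, which contains `1`, is everything too.
  let S : Subalgebra K R :=
    { carrier := {x | ∀ y ∈ ψ.range, x * y ∈ ψ.range}
      mul_mem' := fun {x x'} hx hx' y hy => by rw [mul_assoc]; exact hx _ (hx' _ hy)
      add_mem' := fun {x x'} hx hx' y hy => by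
        rw [add_mul]; exact ψ.range.add_mem (hx _ hy) (hx' _ hy)
      algebraMap_mem' := by
        rintro k _ ⟨M, rfl⟩
        refine ⟨k • M, ?_⟩
        rw [← Algebra.smul_def, hψ, hψ, hψ₀, hψ₀]
        simp [Finset.smul_sum] }
  have hS : S = ⊤ := by
    apply hG
    rintro g hg _ ⟨M, rfl⟩
    rw [hψ, hψ₀]
    simp only [Finset.mul_sum]
    refine sum_mem fun i _ => sum_mem fun p _ => sum_mem fun q _ => ?_
    obtain ⟨p', y, hy⟩ := hGa g hg i p
    rw [← mul_assoc, ← mul_assoc, hy, mul_assoc (a i p'), ← hθ]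
    exact hunit i p' q _
  refine ⟨RingEquiv.ofBijective ψ ⟨?_, ?_⟩⟩
  · rw [injective_iff_map_eq_zero]
    intro M hM
    ext i p q
    apply hinj i
    have h := hrow M i p
    rw [← hψ, hM, mul_zero] at h
    have h' := congrArg (· * a i q) h
    simp only [zero_mul, Finset.sum_mul] at h'
    rw [Finset.sum_eq_single q, mul_assoc, hba, hθ1'] at h'
    · simpa using h'.symm
    · intro q' _ hq'
      rw [mul_assoc, hbap i q' q hq', mul_zero]
    · simp
  · intro x
    have hx : x ∈ S := by rw [hS]; trivial
    have := hx 1 ψ.range.one_mem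
    rwa [mul_one] at this

end matrix_units

/-! ### Arriving paths and terminal sets of vertices -/

section paths

variable {V E : Type*} {s r : E → V}

lemma isPathFrom_cons (v : V) (e : E) (l : List E) :
    IsPathFrom s r v (e :: l) ↔ s e = v ∧ IsPathFrom s r (r e) l := by
  unfold IsPathFrom List.Chain'
  cases l with
  | nil => simp
  | cons f l =>
    simp only [List.isChain_cons_cons, List.head_cons, ne_eq, reduceCtorEq, not_false_eq_true,
      forall_true_left]
    constructor
    · rintro ⟨⟨h1, h2⟩, h3⟩; exact ⟨h3, h2, h1.symm⟩
    · rintro ⟨h3, h2, h1⟩; exact ⟨⟨h1.symm, h2⟩, h3⟩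

lemma pathEnd_cons (v : V) (e : E) (l : List E) : pathEnd r v (e :: l) = pathEnd r (r e) l := by
  cases l <;> simp [pathEnd]

/-- `l` is a path from `v` arriving at the set `D`: it ends in `D` and none of its edges starts
in `D`. -/
def Arrives (s r : E → V) (D : Set V) (v : V) (l : List E) : Prop :=
  IsPathFrom s r v l ∧ pathEnd r v l ∈ D ∧ ∀ e ∈ l, s e ∉ D

/-- The paths arriving at `D`. -/
abbrev ArrivingPaths (s r : E → V) (D : Set V) := {p : V × List E // Arrives s r D p.1 p.2}

lemma arrives_nil {D : Set V} {v : V} : Arrives s r D v [] ↔ v ∈ D := by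
  simp [Arrives, IsPathFrom, List.Chain', pathEnd]

lemma arrives_cons {D : Set V} {v : V} {e : E} {l : List E} :
    Arrives s r D v (e :: l) ↔ s e = v ∧ s e ∉ D ∧ Arrives s r D (r e) l := by
  simp only [Arrives, isPathFrom_cons, pathEnd_cons, List.mem_cons, forall_eq_or_imp]
  tauto

/-- A nonempty set of vertices each of which emits an edge into the set contains a vertex lying
on a cycle. -/
lemma exists_cycle [Finite V] (W : Set V) (hW : ∀ v ∈ W, ∃ e, s e = v ∧ r e ∈ W)
    (hne : W.Nonempty) :
    ∃ C ∈ cycleVertexSets s r, ∃ u ∈ C, u ∈ W := by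
  choose nxt hs hr using fun v : W => hW v.1 v.2
  let f : W → W := fun v => ⟨r (nxt v), hr v⟩
  obtain ⟨v, hv⟩ := hne
  obtain ⟨a, b, hab, heq⟩ := Finite.exists_ne_map_eq_of_infinite (fun n : ℕ => f^[n] ⟨v, hv⟩)
  wlog hlt : a < b generalizing a b
  · exact this b a hab.symm heq.symm (by omega)
  set y := f^[a] ⟨v, hv⟩ with hy
  have hper : Function.IsPeriodicPt f (b - a) y := by
    unfold Function.IsPeriodicPt Function.IsFixedPt
    rw [hy, ← Function.iterate_add_apply, Nat.sub_add_cancel hlt.le]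
    exact heq.symm
  have hpos : 0 < Function.minimalPeriod f y := hper.minimalPeriod_pos (by omega)
  refine ⟨_, ⟨Function.minimalPeriod f y, fun i => nxt (f^[i] y), ⟨hpos, ?_, ?_, ?_⟩, rfl⟩, y.1,
    ⟨0, (hs y).symm⟩, y.2⟩
  · intro i
    rw [hs, Function.iterate_succ_apply']
  · intro i
    simp only [Function.iterate_add_minimalPeriod_eq]
  · intro i j hi hj h
    simp only [hs] at h
    exact Function.iterate_injOn_Iio_minimalPeriod hi hj (Subtype.ext h)

end paths

section terminal

variable {K V E : Type*} [Field K] {s r : E → V}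

/-- Data attached to a set `D` of vertices that no path can leave, exhibiting
`vtx u * L * vtx v`, for `u v ∈ D`, as a copy of `A`. The map `θ` identifies `A` with the corner
ring at a base vertex of `D`, and `g u`, `gs u` are mutually inverse elements linking `u ∈ D` to
this base vertex; they carry no information for `u ∉ D`. -/
structure Terminal (K : Type*) {V E : Type*} [Field K] (s r : E → V) (A : Type*) [Ring A]
    [Algebra K A] (D : Set V) where
  θ : A →ₗ[K] LeavittPathAlgebra K s r
  g : V → LeavittPathAlgebra K s r
  gs : V → LeavittPathAlgebra K s r
  map_mul : ∀ x y, θ (x * y) = θ x * θ y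
  inj : Function.Injective θ
  vtx_mul_g : ∀ u ∈ D, vtx K s r u * g u = g u
  gs_mul_vtx : ∀ u ∈ D, gs u * vtx K s r u = gs u
  g_mul_one : ∀ u ∈ D, g u * θ 1 = g u
  one_mul_gs : ∀ u ∈ D, θ 1 * gs u = gs u
  gs_mul_g : ∀ u ∈ D, gs u * g u = θ 1
  g_mul_gs : ∀ u ∈ D, g u * gs u = vtx K s r u
  closed : ∀ e, s e ∈ D → r e ∈ D
  edg_mul_g : ∀ e, s e ∈ D → ∃ y, edg K s r e * g (r e) = g (s e) * θ y
  gh_mul_g : ∀ e, s e ∈ D → ∃ y, gh K s r e * g (s e) = g (r e) * θ y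

namespace Terminal

variable {A : Type*} [Ring A] [Algebra K A] {D : Set V} (T : Terminal K s r A D)
  {A' : Type*} [Ring A'] [Algebra K A'] {D' : Set V} (T' : Terminal K s r A' D')

/-- The element `e₁ ⋯ eₙ * g u` attached to a path `e₁ ⋯ eₙ` with end `u`. -/
def pathL (T : Terminal K s r A D) : V → List E → LeavittPathAlgebra K s r
  | v, [] => T.g v
  | _, e :: l => edg K s r e * pathL T (r e) l

/-- The element `gs u * eₙ^* ⋯ e₁^*` attached to a path `e₁ ⋯ eₙ` with end `u`. -/
def pathR (T : Terminal K s r A D) : V → List E → LeavittPathAlgebra K s r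
  | v, [] => T.gs v
  | _, e :: l => pathR T (r e) l * gh K s r e

lemma vtx_mul_pathL {v : V} {l : List E} (h : Arrives s r D v l) :
    vtx K s r v * T.pathL v l = T.pathL v l := by
  cases l with
  | nil => exact T.vtx_mul_g v (arrives_nil.1 h)
  | cons e l =>
    obtain ⟨rfl, -, -⟩ := arrives_cons.1 h
    rw [pathL, ← mul_assoc, vtx_mul_edg]

lemma pathR_mul_vtx {v : V} {l : List E} (h : Arrives s r D v l) :
    T.pathR v l * vtx K s r v = T.pathR v l := by
  cases l with
  | nil => exact T.gs_mul_vtx v (arrives_nil.1 h)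
  | cons e l =>
    obtain ⟨rfl, -, -⟩ := arrives_cons.1 h
    rw [pathR, mul_assoc, gh_mul_vtx]

lemma vtx_mul_pathL_ne {w v : V} {l : List E} (h : Arrives s r D v l) (hw : w ≠ v) :
    vtx K s r w * T.pathL v l = 0 := by
  rw [← T.vtx_mul_pathL h, ← mul_assoc, vtx_mul_vtx, if_neg hw, zero_mul]

lemma pathL_mul_one {v : V} {l : List E} (h : Arrives s r D v l) :
    T.pathL v l * T.θ 1 = T.pathL v l := by
  induction l generalizing v with
  | nil => exact T.g_mul_one v (arrives_nil.1 h)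
  | cons e l ih => rw [pathL, mul_assoc, ih (arrives_cons.1 h).2.2]

lemma one_mul_pathR {v : V} {l : List E} (h : Arrives s r D v l) :
    T.θ 1 * T.pathR v l = T.pathR v l := by
  induction l generalizing v with
  | nil => exact T.one_mul_gs v (arrives_nil.1 h)
  | cons e l ih => rw [pathR, ← mul_assoc, ih (arrives_cons.1 h).2.2]

lemma pathR_mul_pathL {v : V} {l : List E} (h : Arrives s r D v l) :
    T.pathR v l * T.pathL v l = T.θ 1 := by
  induction l generalizing v with
  | nil => exact T.gs_mul_g v (arrives_nil.1 h)
  | cons e l ih =>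
    have h' := (arrives_cons.1 h).2.2
    rw [pathR, pathL, mul_assoc, ← mul_assoc (gh K s r e), gh_mul_edg_self, T.vtx_mul_pathL h',
      ih h']

include T in
/-- A path leading from `D` to `D'` forces `D` and `D'` to meet. -/
lemma exists_mem_of_arrives {v : V} {l : List E} (hv : v ∈ D) (h : Arrives s r D' v l) :
    ∃ u ∈ D, u ∈ D' := by
  induction l generalizing v with
  | nil => exact ⟨v, hv, arrives_nil.1 h⟩
  | cons e l ih =>
    obtain ⟨rfl, -, h'⟩ := arrives_cons.1 h
    exact ih (T.closed e hv) h'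

/-- Orthogonality of the elements attached to different arriving paths. -/
lemma eq_of_pathR_mul_pathL_ne_zero (hd : ∀ u, u ∈ D → u ∈ D' → D = D') {v v' : V} {l l' : List E}
    (h : Arrives s r D v l) (h' : Arrives s r D' v' l') (hne : T.pathR v l * T'.pathL v' l' ≠ 0) :
    D = D' ∧ v = v' ∧ l = l' := by
  induction l generalizing v v' l' with
  | nil =>
    have hvv : v = v' := by
      by_contra hvv
      apply hne
      rw [← T.pathR_mul_vtx h, mul_assoc, T'.vtx_mul_pathL_ne h' hvv, mul_zero]
    subst hvv
    have hv := arrives_nil.1 h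
    obtain ⟨u, hu, hu'⟩ := T.exists_mem_of_arrives hv h'
    have hD := hd u hu hu'
    subst hD
    cases l' with
    | nil => exact ⟨rfl, rfl, rfl⟩
    | cons e t =>
      obtain ⟨rfl, hn, -⟩ := arrives_cons.1 h'
      exact absurd hv hn
  | cons e l ih =>
    have hvv : v = v' := by
      by_contra hvv
      apply hne
      rw [← T.pathR_mul_vtx h, mul_assoc, T'.vtx_mul_pathL_ne h' hvv, mul_zero]
    subst hvv
    cases l' with
    | nil =>
      have hv := arrives_nil.1 h'
      obtain ⟨u, hu, hu'⟩ := T'.exists_mem_of_arrives hv h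
      have hD := hd u hu' hu
      subst hD
      obtain ⟨rfl, hn, -⟩ := arrives_cons.1 h
      exact absurd hv hn
    | cons e' l' =>
      have h1 := (arrives_cons.1 h).2.2
      have h2 := (arrives_cons.1 h').2.2
      rw [pathR, pathL, mul_assoc, ← mul_assoc (gh K s r e), gh_mul_edg] at hne
      split_ifs at hne with hee
      · subst hee
        rw [T'.vtx_mul_pathL h2] at hne
        obtain ⟨hD, -, hl⟩ := ih h1 h2 hne
        exact ⟨hD, rfl, by rw [hl]⟩
      · simp at hne

/-- Left multiplication by a generator sends the element attached to an arriving path to a right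
`A`-multiple of such an element, possibly `0`. -/
lemma generator_mul_pathL (x : LeavittPathAlgebra K s r)
    (hx : (∃ v, x = vtx K s r v) ∨ (∃ e, x = edg K s r e) ∨ ∃ e, x = gh K s r e)
    (p : ArrivingPaths s r D) :
    ∃ (q : ArrivingPaths s r D) (y : A), x * T.pathL p.1.1 p.1.2 = T.pathL q.1.1 q.1.2 * T.θ y := by
  obtain ⟨⟨v, l⟩, h⟩ := p
  replace h : Arrives s r D v l := h
  have zero : x * T.pathL v l = 0 → ∃ (q : ArrivingPaths s r D) (y : A),
      x * T.pathL v l = T.pathL q.1.1 q.1.2 * T.θ y :=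
    fun h0 => ⟨⟨(v, l), h⟩, 0, by rw [h0, map_zero, mul_zero]⟩
  rcases hx with ⟨w, rfl⟩ | ⟨e, rfl⟩ | ⟨e, rfl⟩
  · by_cases hw : w = v
    · subst hw
      exact ⟨⟨(w, l), h⟩, 1, by rw [T.pathL_mul_one h, T.vtx_mul_pathL h]⟩
    · exact zero (T.vtx_mul_pathL_ne h hw)
  · by_cases hv : r e = v
    · subst hv
      by_cases hs : s e ∈ D
      · cases l with
        | nil =>
          obtain ⟨y, hy⟩ := T.edg_mul_g e hs
          exact ⟨⟨(s e, []), arrives_nil.2 hs⟩, y, hy⟩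
        | cons f l =>
          obtain ⟨hf, hn, -⟩ := arrives_cons.1 h
          exact absurd (T.closed e hs) (hf ▸ hn)
      · have h' : Arrives s r D (s e) (e :: l) := arrives_cons.2 ⟨rfl, hs, h⟩
        exact ⟨⟨(s e, e :: l), h'⟩, 1, (T.pathL_mul_one h').symm⟩
    · exact zero (by rw [← T.vtx_mul_pathL h, ← mul_assoc, edg_mul_vtx_ne hv, zero_mul])
  · by_cases hv : s e = v
    · subst hv
      cases l with
      | nil =>
        have hs := arrives_nil.1 h
        obtain ⟨y, hy⟩ := T.gh_mul_g e hs
        exact ⟨⟨(r e, []), arrives_nil.2 (T.closed e hs)⟩, y, hy⟩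
      | cons f l =>
        obtain ⟨-, -, h'⟩ := arrives_cons.1 h
        by_cases hef : e = f
        · subst hef
          refine ⟨⟨(r e, l), h'⟩, 1, ?_⟩
          rw [T.pathL_mul_one h']
          change gh K s r e * (edg K s r e * T.pathL (r e) l) = _
          rw [← mul_assoc, gh_mul_edg_self, T.vtx_mul_pathL h']
        · apply zero
          rw [pathL, ← mul_assoc, gh_mul_edg, if_neg hef, zero_mul]
    · exact zero (by rw [← T.vtx_mul_pathL h, ← mul_assoc, gh_mul_vtx_ne hv, zero_mul])

include T in
/-- The elements `pathL p * pathR p` are orthogonal idempotents, so there are only finitely many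
arriving paths. -/
lemma finite_arrivingPaths [Nontrivial A] [IsNoetherianRing (LeavittPathAlgebra K s r)] :
    Finite (ArrivingPaths s r D) := by
  refine finite_of_orthogonal
    (fun p : ArrivingPaths s r D => T.pathL p.1.1 p.1.2 * T.pathR p.1.1 p.1.2) ?_ ?_ ?_
  · intro p h0
    have h1 : T.θ 1 * T.θ 1 = 0 := by
      rw [← T.pathR_mul_pathL p.2, mul_assoc, ← mul_assoc (T.pathL _ _), h0, zero_mul, mul_zero]
    rw [← T.map_mul, mul_one] at h1
    exact one_ne_zero (T.inj (h1.trans (map_zero _).symm))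
  · intro p
    rw [mul_assoc, ← mul_assoc (T.pathR _ _), T.pathR_mul_pathL p.2, T.one_mul_pathR p.2]
  · intro p q hpq
    rw [mul_assoc, ← mul_assoc (T.pathR _ _)]
    have : T.pathR p.1.1 p.1.2 * T.pathL q.1.1 q.1.2 = 0 := by
      by_contra hne
      obtain ⟨-, h1, h2⟩ := T.eq_of_pathR_mul_pathL_ne_zero T (fun _ _ _ => rfl) p.2 q.2 hne
      exact hpq (Subtype.ext (Prod.ext h1 h2))
    rw [this, zero_mul, mul_zero]

end Terminal

/-- The structure theorem, given terminal data `T i` on disjoint sets `D i` comprising all cycles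
and all vertices that are not regular. -/
lemma nonempty_ringEquiv_of_terminal [Fintype V] {I : Type*} [Fintype I] {A : I → Type*}
    [∀ i, Ring (A i)] [∀ i, Algebra K (A i)] (D : I → Set V)
    (T : ∀ i, Terminal K s r (A i) (D i)) [∀ i, Fintype (ArrivingPaths s r (D i))]
    (hd : ∀ i j u, u ∈ D i → u ∈ D j → i = j)
    (hreg : ∀ v, (∀ i, v ∉ D i) → IsRegular s v)
    (hcyc : ∀ C ∈ cycleVertexSets s r, ∃ i, D i = C) :
    Nonempty ((∀ i, Matrix (ArrivingPaths s r (D i)) (ArrivingPaths s r (D i)) (A i)) ≃+*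
      LeavittPathAlgebra K s r) := by
  have horth : ∀ i j (p : ArrivingPaths s r (D i)) (q : ArrivingPaths s r (D j)),
      (T i).pathR p.1.1 p.1.2 * (T j).pathL q.1.1 q.1.2 ≠ 0 → i = j ∧ p.1 = q.1 := by
    intro i j p q hne
    obtain ⟨hD, h1, h2⟩ := (T i).eq_of_pathR_mul_pathL_ne_zero (T j)
      (fun u hu hu' => by rw [hd i j u hu hu']) p.2 q.2 hne
    refine ⟨hd i j (pathEnd r p.1.1 p.1.2) p.2.2.1 (hD ▸ p.2.2.1), Prod.ext h1 h2⟩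
  have hsame : ∀ i (p q : ArrivingPaths s r (D i)), p ≠ q →
      (T i).pathR p.1.1 p.1.2 * (T i).pathL q.1.1 q.1.2 = 0 := by
    intro i p q hpq
    by_contra hne
    exact hpq (Subtype.ext (horth i i p q hne).2)
  have hdiff : ∀ i j (p : ArrivingPaths s r (D i)) (q : ArrivingPaths s r (D j)), i ≠ j →
      (T i).pathR p.1.1 p.1.2 * (T j).pathL q.1.1 q.1.2 = 0 := by
    intro i j p q hij
    by_contra hne
    exact hij (horth i j p q hne).1
  refine matrix_recognition (fun i => (T i).θ) (fun i p => (T i).pathL p.1.1 p.1.2)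
    (fun i p => (T i).pathR p.1.1 p.1.2) (fun i => (T i).map_mul) (fun i => (T i).inj)
    (fun i p => (T i).pathR_mul_pathL p.2) hsame hdiff (fun i p => (T i).one_mul_pathR p.2) ?_
    (Set.range (vtx K s r) ∪ Set.range (edg K s r) ∪ Set.range (gh K s r)) ?_ ?_
  · set q : LeavittPathAlgebra K s r := 1 - ∑ i, ∑ p : ArrivingPaths s r (D i),
      (T i).pathL p.1.1 p.1.2 * (T i).pathR p.1.1 p.1.2 with hq
    have hqL : ∀ i (p : ArrivingPaths s r (D i)), q * (T i).pathL p.1.1 p.1.2 = 0 := by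
      intro i p
      rw [hq, sub_mul, one_mul, Finset.sum_mul, Finset.sum_eq_single i, Finset.sum_mul,
        Finset.sum_eq_single p, mul_assoc, (T i).pathR_mul_pathL p.2, (T i).pathL_mul_one p.2,
        sub_self]
      · intro p' _ hp'
        rw [mul_assoc, hsame i p' p hp', mul_zero]
      · simp
      · intro j _ hj
        rw [Finset.sum_mul]
        refine Finset.sum_eq_zero fun p' _ => ?_
        rw [mul_assoc, hdiff j i p' p hj, mul_zero]
      · simp
    -- The vertices `v` with `q * x * v ≠ 0` for some `x` such that `q * x` annihilates all paths
    -- arriving from `v`. By (CK2) each of them emits an edge to another one, so some of them would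
    -- lie on a cycle; but none of them lies in any `D i`.
    let W : Set V := {v | ∃ x, (∀ i l, Arrives s r (D i) v l → q * x * (T i).pathL v l = 0) ∧
      q * x * vtx K s r v ≠ 0}
    have hWD : ∀ v ∈ W, ∀ i, v ∉ D i := by
      rintro v ⟨x, hx, hne⟩ i hv
      apply hne
      rw [← (T i).g_mul_gs v hv, ← mul_assoc]
      have : q * x * (T i).g v = 0 := hx i [] (arrives_nil.2 hv)
      rw [this, zero_mul]
    have hW : ∀ v ∈ W, ∃ e, s e = v ∧ r e ∈ W := by
      intro v hv
      have hvD := hWD v hv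
      obtain ⟨hne', hfin⟩ := hreg v hvD
      obtain ⟨x, hx, hne⟩ := hv
      rw [vtx_eq_sum v hfin hne', Finset.mul_sum] at hne
      obtain ⟨e, he, hne⟩ := Finset.exists_ne_zero_of_sum_ne_zero hne
      have hse : s e = v := by simpa using he
      refine ⟨e, hse, x * edg K s r e, ?_, ?_⟩
      · intro i l hl
        have := hx i (e :: l) (arrives_cons.2 ⟨hse, hse ▸ hvD i, hl⟩)
        rw [Terminal.pathL] at this
        simpa only [mul_assoc] using this
      · intro h0
        apply hne
        rw [← mul_assoc, mul_assoc q x, ← edg_mul_vtx, ← mul_assoc, ← mul_assoc,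
          mul_assoc q x, h0, zero_mul]
    have hq0 : ∀ v, q * vtx K s r v = 0 := by
      intro v
      by_contra hne
      obtain ⟨C, hC, u, huC, huW⟩ := exists_cycle W hW
        ⟨v, 1, fun i l hl => by rw [mul_one]; exact hqL i ⟨(v, l), hl⟩, by rwa [mul_one]⟩
      obtain ⟨i, rfl⟩ := hcyc C hC
      exact hWD u huW i huC
    have : q = 0 := by
      rw [← mul_one q, one_eq_sum, Finset.mul_sum]
      exact Finset.sum_eq_zero fun v _ => hq0 v
    exact (sub_eq_zero.1 this).symm
  · intro S hS
    exact subalgebra_eq_top S (fun v => hS (Or.inl (Or.inl ⟨v, rfl⟩)))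
      (fun e => hS (Or.inl (Or.inr ⟨e, rfl⟩))) (fun e => hS (Or.inr ⟨e, rfl⟩))
  · rintro x hx i p
    refine (T i).generator_mul_pathL x ?_ p
    rcases hx with (⟨v, rfl⟩ | ⟨e, rfl⟩) | ⟨e, rfl⟩
    · exact Or.inl ⟨v, rfl⟩
    · exact Or.inr (Or.inl ⟨e, rfl⟩)
    · exact Or.inr (Or.inr ⟨e, rfl⟩)

end terminal

/-! ### Cycles without exits -/

section corner

/-- In `v * R * v + (1 - v)` products are computed in the corner `v * R * v`. -/
lemma add_one_sub_mul {R : Type*} [Ring R] {v x y : R} (hv : v * v = v) (hx : x * v = x)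
    (hy : v * y = y) : (x + (1 - v)) * (y + (1 - v)) = x * y + (1 - v) := by
  simp only [add_mul, mul_add, sub_mul, mul_sub, one_mul, mul_one, hx, hy, hv, sub_self, add_zero]
  abel

open LaurentPolynomial in
/-- Mutually inverse elements `a`, `b` of the corner `v * R * v` define an action of Laurent
polynomials, obtained by substituting the unit `a + (1 - v)` and cutting down by `v`. -/
lemma exists_corner {K R : Type*} [Field K] [Ring R] [Algebra K R] {v a b : R} (hv : v * v = v)
    (hva : v * a = a) (hav : a * v = a) (hvb : v * b = b) (hbv : b * v = b) (hab : a * b = v)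
    (hba : b * a = v) :
    ∃ θ : LaurentPolynomial K →ₗ[K] R, (∀ x y, θ (x * y) = θ x * θ y) ∧ θ 1 = v ∧
      θ (T 1) = a ∧ θ (T (-1)) = b := by
  let u : Rˣ := ⟨a + (1 - v), b + (1 - v), by rw [add_one_sub_mul hv hav hvb, hab]; abel,
    by rw [add_one_sub_mul hv hbv hva, hba]; abel⟩
  let θ₀ : LaurentPolynomial K →ₐ[K] R :=
    AddMonoidAlgebra.lift K R ℤ ((Units.coeHom R).comp (zpowersHom Rˣ u))
  have hT : ∀ n : ℤ, θ₀ (T n) = ((u ^ n : Rˣ) : R) := by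
    intro n
    refine (AddMonoidAlgebra.lift_single _ _ _).trans ?_
    simp
  have hcu : Commute v (u : R) := by
    change v * (a + (1 - v)) = (a + (1 - v)) * v
    simp only [add_mul, mul_add, sub_mul, mul_sub, one_mul, mul_one, hva, hav]
  have hc : ∀ x, v * θ₀ x = θ₀ x * v := by
    intro x
    induction x using LaurentPolynomial.induction_on' with
    | add p q hp hq => rw [map_add, mul_add, add_mul, hp, hq]
    | C_mul_T n k =>
      rw [← smul_eq_C_mul, map_smul, hT, mul_smul_comm, smul_mul_assoc]
      congr 1
      exact hcu.units_zpow_right n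
  refine ⟨(LinearMap.mulRight K v).comp θ₀.toLinearMap, ?_, ?_, ?_, ?_⟩
  · intro x y
    change θ₀ (x * y) * v = θ₀ x * v * (θ₀ y * v)
    rw [map_mul, mul_assoc (θ₀ x) v, ← mul_assoc v, hc y, mul_assoc (θ₀ y), hv, mul_assoc]
  · change θ₀ 1 * v = v
    rw [map_one, one_mul]
  · change θ₀ (T 1) * v = a
    rw [hT, zpow_one]
    change (a + (1 - v)) * v = a
    rw [add_mul, sub_mul, one_mul, hv, sub_self, add_zero, hav]
  · change θ₀ (T (-1)) * v = b
    rw [hT, zpow_neg_one]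
    change (b + (1 - v)) * v = b
    rw [add_mul, sub_mul, one_mul, hv, sub_self, add_zero, hbv]

end corner

section cycles

variable {K V E : Type*} [Field K] {s r : E → V}

/-- The path `c 0 ⋯ c (n - 1)`, as an element of the Leavitt path algebra. -/
def fwd (K : Type*) {V E : Type*} [Field K] (s r : E → V) (c : ℕ → E) :
    ℕ → LeavittPathAlgebra K s r
  | 0 => vtx K s r (s (c 0))
  | n + 1 => fwd K s r c n * edg K s r (c n)

/-- The ghost path `(c (n - 1))^* ⋯ (c 0)^*`, as an element of the Leavitt path algebra. -/
def bwd (K : Type*) {V E : Type*} [Field K] (s r : E → V) (c : ℕ → E) :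
    ℕ → LeavittPathAlgebra K s r
  | 0 => vtx K s r (s (c 0))
  | n + 1 => gh K s r (c n) * bwd K s r c n

variable {c : ℕ → E}

lemma apply_mod_of_periodic {m : ℕ} (hper : ∀ i, c (i + m) = c i) (i : ℕ) : c (i % m) = c i := by
  conv_rhs => rw [← Nat.mod_add_div i m]
  generalize i / m = q
  induction q with
  | zero => rfl
  | succ q ih => rw [Nat.mul_succ, ← add_assoc, hper, ih]

lemma vtx_mul_fwd (n : ℕ) : vtx K s r (s (c 0)) * fwd K s r c n = fwd K s r c n := by
  induction n with
  | zero => exact vtx_mul_self _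
  | succ n ih => rw [fwd, ← mul_assoc, ih]

lemma bwd_mul_vtx (n : ℕ) : bwd K s r c n * vtx K s r (s (c 0)) = bwd K s r c n := by
  induction n with
  | zero => exact vtx_mul_self _
  | succ n ih => rw [bwd, mul_assoc, ih]

lemma fwd_mul_vtx (hc : IsInfPath s r c) (n : ℕ) :
    fwd K s r c n * vtx K s r (s (c n)) = fwd K s r c n := by
  cases n with
  | zero => exact vtx_mul_self _
  | succ n => rw [fwd, mul_assoc, ← hc n, edg_mul_vtx]

lemma vtx_mul_bwd (hc : IsInfPath s r c) (n : ℕ) :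
    vtx K s r (s (c n)) * bwd K s r c n = bwd K s r c n := by
  cases n with
  | zero => exact vtx_mul_self _
  | succ n => rw [bwd, ← mul_assoc, ← hc n, vtx_mul_gh]

lemma bwd_mul_fwd (hc : IsInfPath s r c) (n : ℕ) :
    bwd K s r c n * fwd K s r c n = vtx K s r (s (c n)) := by
  induction n with
  | zero => exact vtx_mul_self _
  | succ n ih =>
    rw [bwd, fwd, mul_assoc, ← mul_assoc (bwd K s r c n), ih, vtx_mul_edg, gh_mul_edg_self, hc n]

lemma edg_mul_gh_of_noExit (hx : CycleNoExit s c) (n : ℕ) :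
    edg K s r (c n) * gh K s r (c n) = vtx K s r (s (c n)) := by
  have hset : {e : E | s e = s (c n)} = {c n} := by
    ext e
    exact ⟨fun h => hx n e h, fun h => by rw [Set.mem_singleton_iff.1 h]; rfl⟩
  have hfin : {e : E | s e = s (c n)}.Finite := by rw [hset]; exact Set.finite_singleton _
  have hto : hfin.toFinset = {c n} := by
    ext e
    rw [Set.Finite.mem_toFinset, hset, Set.mem_singleton_iff, Finset.mem_singleton]
  rw [vtx_eq_sum (s (c n)) hfin ⟨c n, rfl⟩, hto, Finset.sum_singleton]

lemma fwd_mul_bwd (hc : IsInfPath s r c) (hx : CycleNoExit s c) (n : ℕ) :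
    fwd K s r c n * bwd K s r c n = vtx K s r (s (c 0)) := by
  induction n with
  | zero => exact vtx_mul_self _
  | succ n ih =>
    rw [bwd, fwd, mul_assoc, ← mul_assoc (edg K s r (c n)), edg_mul_gh_of_noExit hx,
      vtx_mul_bwd hc, ih]

/-- A multiplicative linear map on Laurent polynomials is injective as soon as the image of
`T` is homogeneous of nonzero degree for the `ℤ`-grading. -/
lemma corner_injective {θ : LaurentPolynomial K →ₗ[K] LeavittPathAlgebra K s r}
    (hmul : ∀ x y, θ (x * y) = θ x * θ y) (h1 : θ 1 ≠ 0)
    {γ : LeavittPathAlgebra K s r →ₐ[K] AddMonoidAlgebra (LeavittPathAlgebra K s r) ℤ} {m : ℤ}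
    (hm : m ≠ 0) (h0 : γ (θ 1) = .single 0 (θ 1))
    (hp : γ (θ (.T 1)) = .single m (θ (.T 1)))
    (hn : γ (θ (.T (-1))) = .single (-m) (θ (.T (-1)))) : Function.Injective θ := by
  have hT : ∀ n : ℤ, γ (θ (.T n)) = .single (m * n) (θ (.T n)) := by
    intro n
    induction n using Int.induction_on with
    | zero => rw [mul_zero, LaurentPolynomial.T_zero, h0]
    | succ n ih =>
      rw [LaurentPolynomial.T_add, hmul, map_mul, ih, hp, AddMonoidAlgebra.single_mul_single,
        mul_add, mul_one]
    | pred n ih =>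
      rw [sub_eq_add_neg, LaurentPolynomial.T_add, hmul, map_mul, ih, hn,
        AddMonoidAlgebra.single_mul_single, mul_add, mul_neg_one]
  have hcoeff : ∀ (x : LaurentPolynomial K) (n : ℤ),
      (γ (θ x)).coeff (m * n) = x.coeff n • θ (.T n) := by
    intro x n
    induction x using LaurentPolynomial.induction_on' with
    | add p q hp hq =>
      simp only [map_add, AddMonoidAlgebra.coeff_add, Finsupp.add_apply, hp, hq, add_smul]
    | C_mul_T k a =>
      rw [← LaurentPolynomial.smul_eq_C_mul, map_smul, map_smul, hT]
      simp only [AddMonoidAlgebra.coeff_smul, Finsupp.smul_apply, AddMonoidAlgebra.coeff_single,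
        Finsupp.single_apply, mul_right_inj' hm, LaurentPolynomial.T_apply]
      split_ifs with h
      · rw [h, smul_eq_mul, mul_one]
      · simp
  rw [injective_iff_map_eq_zero]
  intro x hx
  ext n
  have h := hcoeff x n
  rw [hx, map_zero] at h
  have hne : θ (.T n) ≠ 0 := by
    intro h0
    apply h1
    rw [← LaurentPolynomial.T_zero, ← add_neg_cancel n, LaurentPolynomial.T_add, hmul, h0, zero_mul]
  have := (smul_eq_zero.1 h.symm).resolve_right hne
  simpa using this

/-- The corner at a vertex of a cycle without exits is the Laurent polynomial ring. -/
lemma nonempty_terminal_cycle {m : ℕ} (hc : IsCycle s r m c) (hx : CycleNoExit s c) :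
    Nonempty (Terminal K s r (LaurentPolynomial K) {v : V | ∃ i, v = s (c i)}) := by
  obtain ⟨hm, hpath, hper, hinj⟩ := hc
  have hper' := apply_mod_of_periodic hper
  have hm0 : c m = c 0 := by rw [← hper' m, Nat.mod_self]
  set v₀ := vtx K s r (s (c 0)) with hv₀
  obtain ⟨θ, hmul, hone, hT, hT'⟩ := exists_corner (K := K) (v := v₀) (a := fwd K s r c m)
    (b := bwd K s r c m) (vtx_mul_self _) (vtx_mul_fwd m) (by rw [hv₀, ← hm0, fwd_mul_vtx hpath])
    (by rw [hv₀, ← hm0, vtx_mul_bwd hpath]) (bwd_mul_vtx m) (fwd_mul_bwd hpath hx m)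
    (by rw [bwd_mul_fwd hpath, hm0])
  have hθinj : Function.Injective θ := by
    obtain ⟨γ, hγv, hγe, hγg⟩ := exists_gauge (K := K) (s := s) (r := r)
    refine corner_injective (γ := γ) (m := m) hmul (by rw [hone]; exact vtx_ne_zero _)
      (by omega) (by rw [hone, hγv]) ?_ ?_
    · rw [hT]
      generalize m = n
      induction n with
      | zero => simpa [fwd] using hγv _
      | succ n ih => rw [fwd, map_mul, ih, hγe, AddMonoidAlgebra.single_mul_single]; simp
    · rw [hT']
      generalize m = n
      induction n with
      | zero => simpa [bwd] using hγv _
      | succ n ih =>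
        rw [bwd, map_mul, ih, hγg, AddMonoidAlgebra.single_mul_single, ← neg_add, add_comm]; simp
  -- `idx u` is the position of the vertex `u` on the cycle.
  have hidx : ∀ u : V, ∃ i, (∃ j, u = s (c j)) → i < m ∧ s (c i) = u := by
    intro u
    by_cases h : ∃ j, u = s (c j)
    · obtain ⟨j, rfl⟩ := h
      exact ⟨j % m, fun _ => ⟨Nat.mod_lt _ hm, by rw [hper']⟩⟩
    · exact ⟨0, fun h' => absurd h' h⟩
  choose idx hidx using hidx
  have hlt : ∀ n, n < m → idx (s (c n)) = n := fun n hn =>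
    hinj _ _ (hidx _ ⟨n, rfl⟩).1 hn (hidx _ ⟨n, rfl⟩).2
  -- Only at `n = m`, where the cycle closes up, is the factor `θ y` a power of `T` other than `1`.
  have hshift : ∀ n, n ≤ m → (∃ y, bwd K s r c n = bwd K s r c (idx (s (c n))) * θ y) ∧
      ∃ y, bwd K s r c (idx (s (c n))) = bwd K s r c n * θ y := by
    intro n hn
    rcases hn.lt_or_eq with hn | rfl
    · rw [hlt n hn]
      exact ⟨⟨1, by rw [hone, bwd_mul_vtx]⟩, 1, by rw [hone, bwd_mul_vtx]⟩
    · rw [hm0, hlt 0 hm]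
      exact ⟨⟨.T (-1), by rw [hT', bwd, ← hm0, vtx_mul_bwd hpath]⟩, .T 1,
        by rw [hT, bwd_mul_fwd hpath, hm0, bwd]⟩
  have hedge : ∀ e, s e ∈ {v : V | ∃ i, v = s (c i)} → ∃ n < m, e = c n ∧ r e = s (c (n + 1)) := by
    rintro e ⟨j, hj⟩
    have := hx j e hj
    refine ⟨j % m, Nat.mod_lt _ hm, by rw [hper', this], ?_⟩
    rw [← hpath, hper', this]
  refine ⟨⟨θ, fun u => bwd K s r c (idx u), fun u => fwd K s r c (idx u), hmul, hθinj, ?_, ?_, ?_,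
    ?_, ?_, ?_, ?_, ?_, ?_⟩⟩
  · intro u hu
    have := vtx_mul_bwd (K := K) hpath (idx u)
    rwa [(hidx u hu).2] at this
  · intro u hu
    have := fwd_mul_vtx (K := K) hpath (idx u)
    rwa [(hidx u hu).2] at this
  · intro u _
    rw [hone, bwd_mul_vtx]
  · intro u _
    rw [hone, vtx_mul_fwd]
  · intro u _
    rw [hone, fwd_mul_bwd hpath hx]
  · intro u hu
    rw [bwd_mul_fwd hpath, (hidx u hu).2]
  · intro e he
    obtain ⟨n, -, -, h⟩ := hedge e he
    exact ⟨n + 1, h⟩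
  · intro e he
    obtain ⟨n, hn, rfl, h⟩ := hedge e he
    obtain ⟨y, hy⟩ := (hshift (n + 1) hn).2
    refine ⟨y, ?_⟩
    rw [h, hy, hlt n hn, ← mul_assoc, bwd, ← mul_assoc, edg_mul_gh_of_noExit hx,
      vtx_mul_bwd hpath]
  · intro e he
    obtain ⟨n, hn, rfl, h⟩ := hedge e he
    obtain ⟨y, hy⟩ := (hshift (n + 1) hn).1
    exact ⟨y, by rw [h, ← hy, hlt n hn, bwd]⟩

end cycles

/-! ### Noetherian and Artinian Leavitt path algebras -/

section noetherian

variable {K V E : Type*} [Field K] {s r : E → V}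

/-- A sink spans a copy of `K`, which no path leaves. -/
lemma nonempty_terminal_sink {w : V} (hw : IsSink s w) : Nonempty (Terminal K s r K {w}) := by
  refine ⟨⟨LinearMap.toSpanSingleton K _ (vtx K s r w), fun _ => vtx K s r w,
    fun _ => vtx K s r w, ?_, ?_, ?_, ?_, ?_, ?_, ?_, ?_, ?_, ?_, ?_⟩⟩
  · intro x y
    simp only [LinearMap.toSpanSingleton_apply, smul_mul_smul_comm, vtx_mul_self]
  · intro x y h
    simp only [LinearMap.toSpanSingleton_apply] at h
    exact smul_left_injective K (vtx_ne_zero w) h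
  · rintro u rfl
    exact vtx_mul_self _
  · rintro u rfl
    exact vtx_mul_self _
  · rintro u rfl
    simp
  · rintro u rfl
    simp
  · rintro u rfl
    simp
  · rintro u rfl
    exact vtx_mul_self _
  · intro e he
    exact absurd he (hw e)
  · intro e he
    exact absurd he (hw e)
  · intro e he
    exact absurd he (hw e)

variable (K s r)

lemma finite_vertices [IsNoetherianRing (LeavittPathAlgebra K s r)] : Finite V :=
  finite_of_orthogonal (vtx K s r) vtx_ne_zero vtx_mul_self
    fun v w h => by rw [vtx_mul_vtx, if_neg h]

lemma finite_emitted [IsNoetherianRing (LeavittPathAlgebra K s r)] (v : V) :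
    {e : E | s e = v}.Finite := by
  refine finite_of_orthogonal (ι := {e : E | s e = v})
    (fun e => edg K s r e.1 * gh K s r e.1) ?_ ?_ ?_
  · intro e h
    apply vtx_ne_zero (K := K) (s := s) (r := r) (r e.1)
    rw [← vtx_mul_self, ← gh_mul_edg_self, mul_assoc, ← mul_assoc (edg K s r e.1), h, zero_mul,
      mul_zero]
  · intro e
    rw [mul_assoc, ← mul_assoc (gh K s r e.1), gh_mul_edg_self, vtx_mul_gh]
  · intro e f hef
    rw [mul_assoc, ← mul_assoc (gh K s r e.1), gh_mul_edg, if_neg (fun h => hef (Subtype.ext h)),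
      zero_mul, mul_zero]

/-- A cycle `p` with an exit gives `p^* p = v` but `p p^* ≠ v`, which is impossible in a Noetherian
ring, where one-sided inverses are two-sided. -/
lemma cycleNoExit [IsNoetherianRing (LeavittPathAlgebra K s r)] {m : ℕ} {c : ℕ → E}
    (hc : IsCycle s r m c) : CycleNoExit s c := by
  obtain ⟨hm, hpath, hper, -⟩ := hc
  intro j e he
  rw [← apply_mod_of_periodic hper j] at he ⊢
  have hi : j % m < m := Nat.mod_lt _ hm
  generalize j % m = i at he hi
  have hm0 : c m = c 0 := by simpa using hper 0
  by_contra hne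
  set v := vtx K s r (s (c 0)) with hv
  set p := fwd K s r c m with hp
  set q := bwd K s r c m with hq
  have hvv : v * v = v := vtx_mul_self _
  have hvp : v * p = p := vtx_mul_fwd m
  have hpv : p * v = p := by rw [hv, ← hm0, hp, fwd_mul_vtx hpath]
  have hvq : v * q = q := by rw [hv, ← hm0, hq, vtx_mul_bwd hpath]
  have hqv : q * v = q := bwd_mul_vtx m
  have hqp : q * p = v := by rw [hp, hq, bwd_mul_fwd hpath, hm0]
  have hpq : p * q = v := by
    have h1 : (q + (1 - v)) * (p + (1 - v)) = 1 := by rw [add_one_sub_mul hvv hqv hvp, hqp]; abel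
    have h2 := mul_eq_one_comm.1 h1
    rw [add_one_sub_mul hvv hpv hvq] at h2
    rwa [← sub_eq_zero, add_sub_assoc, sub_sub_cancel_left, ← sub_eq_add_neg, sub_eq_zero] at h2
  -- The path `c 0 ⋯ c (i - 1) e` leaves the cycle, so its ghost annihilates `p`.
  have hzero : ∀ k, gh K s r e * bwd K s r c i * fwd K s r c (i + 1 + k) = 0 := by
    intro k
    induction k with
    | zero =>
      rw [add_zero, fwd, mul_assoc, ← mul_assoc (bwd K s r c i), bwd_mul_fwd hpath, vtx_mul_edg,
        gh_mul_edg, if_neg hne]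
    | succ k ih => rw [← add_assoc, fwd, ← mul_assoc, ih, zero_mul]
  have hzp : gh K s r e * bwd K s r c i * p = 0 := by
    have := hzero (m - (i + 1))
    rwa [Nat.add_sub_cancel' hi] at this
  apply vtx_ne_zero (K := K) (s := s) (r := r) (r e)
  calc vtx K s r (r e) = gh K s r e * (vtx K s r (s (c i)) * edg K s r e) := by
        rw [← he, vtx_mul_edg, gh_mul_edg_self]
    _ = gh K s r e * bwd K s r c i * v * (fwd K s r c i * edg K s r e) := by
        rw [mul_assoc (gh K s r e), hv, bwd_mul_vtx, mul_assoc (gh K s r e),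
          ← mul_assoc (bwd K s r c i), bwd_mul_fwd hpath]
    _ = 0 := by rw [← hpq, ← mul_assoc _ p q, hzp, zero_mul, zero_mul]

variable {K s r}

/-- Cycles without exits that share a vertex have the same vertices. -/
lemma cycle_subset {m m' : ℕ} {c c' : ℕ → E} (hc : IsCycle s r m c) (hc' : IsCycle s r m' c')
    (hx : CycleNoExit s c') {i j : ℕ} (h : s (c i) = s (c' j)) :
    {v : V | ∃ i, v = s (c i)} ⊆ {v : V | ∃ i, v = s (c' i)} := by
  obtain ⟨hm, hpath, hper, -⟩ := hc
  have hk : ∀ k, s (c (i + k)) = s (c' (j + k)) := by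
    intro k
    induction k with
    | zero => exact h
    | succ k ih =>
      have := hx _ _ ih
      rw [← add_assoc, ← add_assoc, ← hpath, ← hc'.2.1, this]
  have hmul : ∀ n q, c (n + m * q) = c n := by
    intro n q
    induction q with
    | zero => rfl
    | succ q ih => rw [Nat.mul_succ, ← add_assoc, hper, ih]
  rintro v ⟨n, rfl⟩
  have hle : i ≤ n + m * i := (Nat.le_mul_of_pos_left i hm).trans (Nat.le_add_left _ _)
  refine ⟨j + (n + m * i - i), ?_⟩
  rw [← hk, Nat.add_sub_cancel' hle, hmul]

lemma cycleVertexSets_eq [IsNoetherianRing (LeavittPathAlgebra K s r)] {C C' : Set V}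
    (hC : C ∈ cycleVertexSets s r) (hC' : C' ∈ cycleVertexSets s r) {u : V} (hu : u ∈ C)
    (hu' : u ∈ C') : C = C' := by
  obtain ⟨m, c, hc, rfl⟩ := hC
  obtain ⟨m', c', hc', rfl⟩ := hC'
  obtain ⟨i, rfl⟩ := hu
  obtain ⟨j, hj⟩ := hu'
  exact (cycle_subset hc hc' (cycleNoExit K s r hc') hj).antisymm
    (cycle_subset hc' hc (cycleNoExit K s r hc) hj.symm)

lemma nonempty_terminal_cycleVertexSet [IsNoetherianRing (LeavittPathAlgebra K s r)] {C : Set V}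
    (hC : C ∈ cycleVertexSets s r) : Nonempty (Terminal K s r (LaurentPolynomial K) C) := by
  obtain ⟨m, c, hc, rfl⟩ := hC
  exact nonempty_terminal_cycle hc (cycleNoExit K s r hc)

variable (K s r)

/-- The terminal sets of vertices: sinks and cycles. -/
def termSet : {v : V // IsSink s v} ⊕ cycleVertexSets s r → Set V
  | .inl w => {w.1}
  | .inr C => C.1

/-- The coefficient rings of the terminal sets. -/
def termRing : {v : V // IsSink s v} ⊕ cycleVertexSets s r → Type _
  | .inl _ => K
  | .inr _ => LaurentPolynomial K

instance termRing.instRing : ∀ i, Ring (termRing K s r i)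
  | .inl _ => inferInstanceAs (Ring K)
  | .inr _ => inferInstanceAs (Ring (LaurentPolynomial K))

instance termRing.instAlgebra : ∀ i, Algebra K (termRing K s r i)
  | .inl _ => inferInstanceAs (Algebra K K)
  | .inr _ => inferInstanceAs (Algebra K (LaurentPolynomial K))

lemma card_arrivingPaths_sink (w : {v : V // IsSink s v}) :
    Nat.card (ArrivingPaths s r {w.1}) = nPathsTo s r w.1 := by
  refine Nat.card_congr (Equiv.subtypeEquivRight fun p => ?_)
  simp only [Arrives, Set.mem_singleton_iff]
  exact ⟨fun h => ⟨h.1, h.2.1⟩, fun h => ⟨h.1, h.2, fun e _ => w.2 e⟩⟩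

lemma card_arrivingPaths_cycle (C : Set V) :
    Nat.card (ArrivingPaths s r C) = nPathsToCycle s r C := rfl

/-- The structure of Noetherian Leavitt path algebras. -/
lemma nonempty_ringEquiv_of_noetherian [IsNoetherianRing (LeavittPathAlgebra K s r)] :
    Nonempty (LeavittPathAlgebra K s r ≃+*
      ((∀ w : {v : V // IsSink s v},
          Matrix (Fin (nPathsTo s r w.1)) (Fin (nPathsTo s r w.1)) K) ×
        (∀ C : cycleVertexSets s r,
          Matrix (Fin (nPathsToCycle s r C.1)) (Fin (nPathsToCycle s r C.1))
            (LaurentPolynomial K)))) := by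
  have hV : Finite V := finite_vertices K s r
  have hT : ∀ i, Nonempty (Terminal K s r (termRing K s r i) (termSet s r i)) := by
    rintro (w | C)
    · exact nonempty_terminal_sink w.2
    · exact nonempty_terminal_cycleVertexSet C.2
  have hfin : ∀ i, Finite (ArrivingPaths s r (termSet s r i)) := by
    rintro (w | C)
    · exact (nonempty_terminal_sink (K := K) (r := r) w.2).some.finite_arrivingPaths
    · exact (nonempty_terminal_cycleVertexSet (K := K) C.2).some.finite_arrivingPaths
  have := Fintype.ofFinite V
  have := Fintype.ofFinite ({v : V // IsSink s v} ⊕ cycleVertexSets s r)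
  have := fun i => Fintype.ofFinite (ArrivingPaths s r (termSet s r i))
  have hd : ∀ i j u, u ∈ termSet s r i → u ∈ termSet s r j → i = j := by
    rintro (w | C) (w' | C') u hu hu'
    · have h1 : u = w.1 := hu
      have h2 : u = w'.1 := hu'
      rw [Subtype.ext (h1.symm.trans h2)]
    · have h1 : u = w.1 := hu
      obtain ⟨m, c, -, hC⟩ := C'.2
      have h2 : u ∈ C'.1 := hu'
      rw [hC] at h2
      obtain ⟨i, hi⟩ := h2
      exact absurd (hi.symm.trans h1) (w.2 _)
    · have h1 : u = w'.1 := hu'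
      obtain ⟨m, c, -, hC⟩ := C.2
      have h2 : u ∈ C.1 := hu
      rw [hC] at h2
      obtain ⟨i, hi⟩ := h2
      exact absurd (hi.symm.trans h1) (w'.2 _)
    · rw [Subtype.ext (cycleVertexSets_eq (K := K) C.2 C'.2 hu hu')]
  have hreg : ∀ v, (∀ i, v ∉ termSet s r i) → IsRegular s v := by
    intro v hv
    refine ⟨?_, finite_emitted K s r v⟩
    by_contra h
    exact hv (.inl ⟨v, fun e he => h ⟨e, he⟩⟩) rfl
  obtain ⟨φ⟩ := nonempty_ringEquiv_of_terminal (termSet s r) (fun i => (hT i).some) hd hreg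
    fun C hC => ⟨.inr ⟨C, hC⟩, rfl⟩
  let ew : ∀ w : {v : V // IsSink s v},
      ArrivingPaths s r (termSet s r (.inl w)) ≃ Fin (nPathsTo s r w.1) := fun w =>
    (Finite.equivFin _).trans (finCongr (card_arrivingPaths_sink s r w))
  let eC : ∀ C : cycleVertexSets s r,
      ArrivingPaths s r (termSet s r (.inr C)) ≃ Fin (nPathsToCycle s r C.1) := fun C =>
    Finite.equivFin _
  let σ : (∀ i, Matrix (ArrivingPaths s r (termSet s r i)) (ArrivingPaths s r (termSet s r i))
      (termRing K s r i)) ≃+*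
      (∀ w : {v : V // IsSink s v}, Matrix (ArrivingPaths s r (termSet s r (.inl w)))
        (ArrivingPaths s r (termSet s r (.inl w))) (termRing K s r (.inl w))) ×
      (∀ C : cycleVertexSets s r, Matrix (ArrivingPaths s r (termSet s r (.inr C)))
        (ArrivingPaths s r (termSet s r (.inr C))) (termRing K s r (.inr C))) :=
    { Equiv.sumPiEquivProdPi _ with
      map_mul' := fun _ _ => rfl
      map_add' := fun _ _ => rfl }
  exact ⟨(φ.symm.trans σ).trans (RingEquiv.prodCongr
    (RingEquiv.piCongrRight fun w => Matrix.reindexRingEquiv K (ew w))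
    (RingEquiv.piCongrRight fun C => Matrix.reindexRingEquiv (LaurentPolynomial K) (eC C)))⟩

/-- The element `1 + T` of `K[T;T⁻¹]` is a nonunit and no zero divisor, so that right
multiplication by it contradicts the descending chain condition. -/
lemma not_isArtinianRing_matrix (n : Type*) [Fintype n] [DecidableEq n] [Nonempty n] :
    ¬ IsArtinianRing (Matrix n n (LaurentPolynomial K)) := by
  intro _
  set t : LaurentPolynomial K := 1 + .T 1 with ht
  have ht0 : LaurentPolynomial.eval₂ (RingHom.id K) (-1 : Kˣ) t = 0 := by
    rw [ht, map_add, map_one, LaurentPolynomial.eval₂_T, zpow_one]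
    simp
  have hne : t ≠ 0 := by
    intro h
    have : t.coeff 0 = 1 := by
      rw [ht, ← LaurentPolynomial.T_zero]
      simp
    rw [h] at this
    simp at this
  let f := LinearMap.toSpanSingleton (Matrix n n (LaurentPolynomial K)) _
    (Matrix.diagonal fun _ : n => t)
  have hf : ∀ x i j, f x i j = x i j * t := fun x i j => Matrix.mul_diagonal _ _ _ _
  obtain ⟨x, hx⟩ := IsArtinian.surjective_of_injective_endomorphism f (by
    intro x y hxy
    ext1 i j
    have := congrFun (congrFun hxy i) j
    rw [hf, hf] at this
    exact mul_right_cancel₀ hne this) 1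
  obtain ⟨i⟩ := ‹Nonempty n›
  have h := hf x i i
  rw [hx, Matrix.one_apply_eq] at h
  have := congrArg (LaurentPolynomial.eval₂ (RingHom.id K) (-1 : Kˣ)) h
  rw [map_one, map_mul, ht0, mul_zero] at this
  exact one_ne_zero this

lemma isEmpty_cycles_of_artinian [IsArtinianRing (LeavittPathAlgebra K s r)] :
    IsEmpty (cycleVertexSets s r) := by
  refine ⟨fun C => ?_⟩
  obtain ⟨φ⟩ := nonempty_ringEquiv_of_noetherian K s r
  have hfin : Finite (ArrivingPaths s r C.1) :=
    (nonempty_terminal_cycleVertexSet (K := K) C.2).some.finite_arrivingPaths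
  have hne : Nonempty (ArrivingPaths s r C.1) := by
    obtain ⟨m, c, -, hC⟩ := C.2
    exact ⟨⟨(s (c 0), []), arrives_nil.2 (by rw [hC]; exact ⟨0, rfl⟩)⟩⟩
  have hpos : 0 < nPathsToCycle s r C.1 := Nat.card_pos (α := ArrivingPaths s r C.1)
  have : Nonempty (Fin (nPathsToCycle s r C.1)) := ⟨⟨0, hpos⟩⟩
  let π := ((Pi.evalRingHom (fun C : cycleVertexSets s r =>
    Matrix (Fin (nPathsToCycle s r C.1)) (Fin (nPathsToCycle s r C.1)) (LaurentPolynomial K))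
      C).comp (RingHom.snd _ _)).comp φ.toRingHom
  have hπ : Function.Surjective π :=
    ((Function.surjective_eval C).comp Prod.snd_surjective).comp φ.surjective
  exact not_isArtinianRing_matrix K _ hπ.isArtinianRing

lemma nonempty_units_mulEquiv [IsNoetherianRing (LeavittPathAlgebra K s r)] :
    Nonempty ((LeavittPathAlgebra K s r)ˣ ≃*
      ((∀ w : {v : V // IsSink s v}, Matrix.GeneralLinearGroup (Fin (nPathsTo s r w.1)) K) ×
        (∀ C : cycleVertexSets s r,
          Matrix.GeneralLinearGroup (Fin (nPathsToCycle s r C.1)) (LaurentPolynomial K)))) := by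
  obtain ⟨φ⟩ := nonempty_ringEquiv_of_noetherian K s r
  exact ⟨((Units.mapEquiv φ.toMulEquiv).trans MulEquiv.prodUnits).trans
    (MulEquiv.prodCongr MulEquiv.piUnits MulEquiv.piUnits)⟩

end noetherian

end LPA

/-- unit groups of one-sided artinian and noetherian Leavitt path algebras. -/
theorem stmt16 (K V E : Type*) [Field K] (s r : E → V) :
    (IsArtinianRing (LPA.LeavittPathAlgebra K s r) →
      Nonempty ((LPA.LeavittPathAlgebra K s r)ˣ ≃*
        (∀ w : {v : V // LPA.IsSink s v},
          Matrix.GeneralLinearGroup (Fin (LPA.nPathsTo s r w.1)) K))) ∧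
    (IsNoetherianRing (LPA.LeavittPathAlgebra K s r) →
      Nonempty ((LPA.LeavittPathAlgebra K s r)ˣ ≃*
        ((∀ w : {v : V // LPA.IsSink s v},
            Matrix.GeneralLinearGroup (Fin (LPA.nPathsTo s r w.1)) K) ×
          (∀ C : LPA.cycleVertexSets s r,
            Matrix.GeneralLinearGroup (Fin (LPA.nPathsToCycle s r C.1))
              (LaurentPolynomial K))))) := by
  refine ⟨fun _ => ?_, fun _ => LPA.nonempty_units_mulEquiv K s r⟩
  have := LPA.isEmpty_cycles_of_artinian K s r
  obtain ⟨φ⟩ := LPA.nonempty_units_mulEquiv K s r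
  exact ⟨φ.trans MulEquiv.prodUnique⟩
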